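/- Let (x_1,…,x_{n+1}) ∈ (ℂ^*)^{n+1} satisfy x_i b_j ∉ qᶻ for all 1 ≤ i, j ≤ n+1. Then each series J(x̂_i) converges absolutely and Σ_{i=1}^{n+1} (−1)^{i−1} J(x̂_i) = C₀ · θ(x_1⋯x_{n+1} b_1⋯b_{n+1}) / ∏_{i=1}^{n+1} ∏_{j=1}^{n+1} θ(x_i b_j) · ∏_{1≤i<j≤n+1} x_j θ(x_i/x_j), where C₀ := (1−q)ⁿ (q)_∞ⁿ ∏_{i=1}^{n+1} ∏_{j=1}^{n+1} (q a_i⁻¹ b_j⁻¹)_∞ / (q a_1⁻¹⋯a_{n+1}⁻¹ b_1⁻¹⋯b_{n+1}⁻¹)_∞. (Bilateral extension of Evans's q-Dixon–Anderson integral; Theorem 4.1 of the paper.) -/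

import Mathlib

/-!
Write `αⱼ = q / aⱼ`. Expanding the Vandermonde product turns each multiple series `J` into an `n × n`
determinant of the one-variable moments `ph q α b s x = ∑_ν z ^ s ∏ⱼ (αⱼ z)_∞ / (bⱼ z)_∞`,
`z = x q ^ ν`, `1 ≤ s ≤ n` (`daTerm_summable`). The alternating sum over the omitted point is then
the cofactor expansion of one `(n + 1) × (n + 1)` determinant `Mx`, with a first row of ones. This
determinant is evaluated in three steps.

*Dependence on `α`.* Telescoping `∏ⱼ (αⱼ z / q)_∞ / (bⱼ z)_∞` over the lattice gives an inhomogeneous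
linear relation among the moments whose coefficients do not depend on the point
(`moment_relation`). It expresses the row of ones through moments, and combined with the contiguity
`(α z)_∞ = (1 - α z) (q α z)_∞` it shows that the determinant satisfies a first-order `q`-difference
equation in each `αⱼ` (`Mx_step`). Iterating towards `αⱼ = 0` gives
`det(α) · (q⁻ⁿ ∏ αⱼ / ∏ bⱼ)_∞ = ∏ᵢⱼ (αᵢ / bⱼ)_∞ · det(0)` (`Mx_eq`).

*Evaluation at `α = q b`.* There the weight is the rational function `∏ⱼ 1 / (1 - bⱼ z)`. For generic
`b`, both the determinant and the claimed product of theta functions are invariant under `y ↦ q y` in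
the first point `y`, with at most simple poles, at `y ∈ bₗ⁻¹ q^ℤ`. The residues on both sides reduce to
the same identity with one point and one parameter fewer (`Mx_pole`, `baseRhs_pole`). By induction the
difference has no poles, so it is constant by Liouville's theorem (`elliptic_liouville`); it vanishes
when `y` equals another point, hence identically (`base_eval`).

*Conclusion.* Solving `Mx_eq` at `α = q b` yields the value at `α = 0` for generic `b`, and by continuity
for all `b` (`zero_eval`). A second use of `Mx_eq`, at `αⱼ = q / aⱼ`, gives the theorem.
-/

open scoped BigOperators
open Finset

/-- The infinite q-Pochhammer symbol `(a)_∞ = ∏_{i=0}^∞ (1 - qⁱ a)`. -/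
noncomputable def qp (q a : ℂ) : ℂ := ∏' i : ℕ, (1 - q ^ i * a)

/-- The theta function `θ(a) = (a)_∞ (q/a)_∞`. -/
noncomputable def th (q a : ℂ) : ℂ := qp q a * qp q (q / a)

/-- Summand of the Jackson integral of Dixon–Anderson type. -/
noncomputable def daTerm {n : ℕ} (q : ℂ) (a b : Fin (n + 1) → ℂ) (x : Fin n → ℂ)
    (ν : Fin n → ℤ) : ℂ :=
  (∏ i, (x i * q ^ ν i *
      ∏ j, qp q (q * (a j)⁻¹ * (x i * q ^ ν i)) / qp q (b j * (x i * q ^ ν i)))) *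
    ∏ i, ∏ j ∈ Finset.Ioi i, (x j * q ^ ν j - x i * q ^ ν i)

/-- The Jackson integral of Dixon–Anderson type `J(x)`. -/
noncomputable def daSum {n : ℕ} (q : ℂ) (a b : Fin (n + 1) → ℂ) (x : Fin n → ℂ) : ℂ :=
  (1 - q) ^ n * ∑' ν : Fin n → ℤ, daTerm q a b x ν

open Filter Topology

/-! ### The infinite q-shifted factorial and the theta function -/

lemma qp_summable {q : ℂ} (hq : ‖q‖ < 1) (z : ℂ) : Summable fun i : ℕ => ‖-(q ^ i * z)‖ := by
  simp only [norm_neg, norm_mul, norm_pow]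
  exact (summable_geometric_of_lt_one (norm_nonneg _) hq).mul_right _

lemma qp_multipliable {q : ℂ} (hq : ‖q‖ < 1) (z : ℂ) :
    Multipliable fun i : ℕ => (1 - q ^ i * z) := by
  simpa [sub_eq_add_neg] using multipliable_one_add_of_summable (qp_summable hq z)

lemma qp_step {q : ℂ} (hq : ‖q‖ < 1) (z : ℂ) : qp q z = (1 - z) * qp q (q * z) := by
  have h := tprod_eq_zero_mul' (f := fun i : ℕ => (1 - q ^ i * z))
    (by simpa [pow_succ, mul_assoc] using qp_multipliable hq (q * z))
  simpa [qp, pow_succ, mul_assoc] using h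

lemma qp_ne_zero {q : ℂ} (hq : ‖q‖ < 1) {z : ℂ} (h : ∀ i : ℕ, q ^ i * z ≠ 1) : qp q z ≠ 0 := by
  have := tprod_one_add_ne_zero_of_summable (f := fun i : ℕ => -(q ^ i * z))
    (fun i => by
      have := h i
      rw [← sub_eq_add_neg]
      exact sub_ne_zero.2 this.symm) (qp_summable hq z)
  simpa [qp, sub_eq_add_neg] using this

lemma qp_differentiable {q : ℂ} (hq : ‖q‖ < 1) : Differentiable ℂ (qp q) := by
  intro z
  have h := Summable.hasProdLocallyUniformlyOn_nat_one_add (K := Metric.ball (0 : ℂ) (‖z‖ + 1))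
    (f := fun (i : ℕ) (z : ℂ) => -(q ^ i * z)) (u := fun i => ‖q‖ ^ i * (‖z‖ + 1))
    Metric.isOpen_ball ((summable_geometric_of_lt_one (norm_nonneg _) hq).mul_right _)
    (Eventually.of_forall fun i w hw => by
      simp only [norm_neg, norm_mul, norm_pow]
      have : ‖w‖ < ‖z‖ + 1 := by simpa using hw
      gcongr)
    (fun i => by fun_prop)
  have h2 := h.differentiableOn (Eventually.of_forall fun s => by fun_prop) Metric.isOpen_ball
  have h3 := h2.differentiableAt (x := z) (Metric.isOpen_ball.mem_nhds (by simp))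
  refine h3.congr_of_eventuallyEq (Eventually.of_forall fun w => ?_)
  simp [qp, sub_eq_add_neg]

lemma qp_zero (q : ℂ) : qp q 0 = 1 := by simp [qp]

lemma qp_one {q : ℂ} (hq : ‖q‖ < 1) : qp q 1 = 0 := by rw [qp_step hq]; simp

lemma qp_continuous {q : ℂ} (hq : ‖q‖ < 1) : Continuous (qp q) := (qp_differentiable hq).continuous

lemma th_eq {q : ℂ} (hq : ‖q‖ < 1) (y : ℂ) : th q y = (1 - y) * qp q (q * y) * qp q (q / y) := by
  rw [th, qp_step hq y]

lemma th_one {q : ℂ} (hq : ‖q‖ < 1) : th q 1 = 0 := by rw [th_eq hq]; simp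

lemma th_mul_q {q : ℂ} (hq0 : q ≠ 0) (hq : ‖q‖ < 1) {y : ℂ} (hy : y ≠ 0) :
    th q (q * y) = -th q y / y := by
  rw [th_eq hq y, th, show q / (q * y) = 1 / y by field_simp, qp_step hq (1 / y)]
  rw [show q * (1 / y) = q / y by ring]
  field_simp
  ring

lemma th_inv {q : ℂ} (hq0 : q ≠ 0) (hq : ‖q‖ < 1) {y : ℂ} (hy : y ≠ 0) :
    th q y⁻¹ = -th q y / y := by
  rw [← th_mul_q hq0 hq hy, th, th, mul_comm]
  congr 2 <;> field_simp

lemma th_ne_zero {q : ℂ} (hq0 : q ≠ 0) (hq : ‖q‖ < 1) {y : ℂ} (hy : y ≠ 0)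
    (h : ∀ m : ℤ, y ≠ q ^ m) : th q y ≠ 0 := by
  refine mul_ne_zero (qp_ne_zero hq fun i hi => h (-i) ?_) (qp_ne_zero hq fun i hi => h (i + 1) ?_)
  · rw [zpow_neg, zpow_natCast]
    exact eq_inv_of_mul_eq_one_right hi
  · rw [zpow_add₀ hq0, zpow_natCast, zpow_one]
    field_simp at hi
    exact hi.symm

lemma th_zpow {q : ℂ} (hq0 : q ≠ 0) (hq : ‖q‖ < 1) {y : ℂ} (hy : y ≠ 0) (m : ℤ) :
    th q (y * q ^ m) = 0 ↔ th q y = 0 := by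
  have key : ∀ y : ℂ, y ≠ 0 → (th q (y * q) = 0 ↔ th q y = 0) := fun y hy => by
    rw [mul_comm, th_mul_q hq0 hq hy]; simp [hy]
  induction m with
  | zero => simp
  | succ i ih =>
    rw [zpow_add₀ hq0, zpow_one, ← mul_assoc]
    exact (key _ (by positivity)).trans ih
  | pred i ih =>
    refine Iff.trans ?_ ih
    rw [← key (y * q ^ (-(i : ℤ) - 1)) (by positivity), mul_assoc, ← zpow_add_one₀ hq0]
    simp

lemma exists_zpow_of_th {q : ℂ} (hq0 : q ≠ 0) (hq : ‖q‖ < 1) {y : ℂ} (hy : y ≠ 0)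
    (h : th q y = 0) : ∃ m : ℤ, y = q ^ m := by
  by_contra! hc
  exact th_ne_zero hq0 hq hy hc h

/-- If `θ(x b) ≠ 0`, the denominator `(b z)_∞` of the weight vanishes nowhere on the lattice
`z ∈ x q^ℤ`. -/
lemma qp_ne_zero_of_th {q : ℂ} (hq0 : q ≠ 0) (hq : ‖q‖ < 1) {x b : ℂ} (hx : x ≠ 0) (hb : b ≠ 0)
    (h : th q (x * b) ≠ 0) (m : ℤ) : qp q (b * (x * q ^ m)) ≠ 0 := by
  have := (th_zpow hq0 hq (mul_ne_zero hx hb) m).not.2 h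
  rw [show b * (x * q ^ m) = x * b * q ^ m by ring]
  exact left_ne_zero_of_mul this

lemma th_differentiableAt {q : ℂ} (hq : ‖q‖ < 1) {y : ℂ} (hy : y ≠ 0) :
    DifferentiableAt ℂ (th q) y := by
  have h1 : DifferentiableAt ℂ (fun y => qp q y * qp q (q / y)) y :=
    (qp_differentiable hq y).mul ((qp_differentiable hq _).comp y
      ((differentiableAt_const q).div differentiableAt_id hy))
  exact h1

/-- The zeros of the theta function are isolated. -/
lemma th_eventually_ne {q : ℂ} (hq0 : q ≠ 0) (hq : ‖q‖ < 1) {y₀ : ℂ} (hy : y₀ ≠ 0) :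
    ∀ᶠ y in 𝓝[≠] y₀, th q y ≠ 0 := by
  by_cases h : th q y₀ = 0
  · obtain ⟨m, rfl⟩ := exists_zpow_of_th hq0 hq hy h
    have h1 : qp q q ≠ 0 := qp_ne_zero hq fun i hi => by
      have := congrArg norm hi
      rw [← pow_succ, norm_pow, norm_one] at this
      exact absurd this (pow_lt_one₀ (norm_nonneg _) hq (by simp)).ne
    have hc : ContinuousAt (fun y => qp q (q * (y * q ^ (-m))) * qp q (q / (y * q ^ (-m)))) (q ^ m) := by
      have := qp_continuous hq
      refine ContinuousAt.mul (by fun_prop) (this.continuousAt.comp ?_)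
      exact ContinuousAt.div (by fun_prop) (by fun_prop) (by positivity)
    have he : q ^ m * q ^ (-m) = 1 := by rw [← zpow_add₀ hq0]; simp
    have hne := hc.eventually_ne (y := 0) (by simp only [he]; simp [h1])
    have hy0 : ∀ᶠ y in 𝓝 (q ^ m), y ≠ 0 := isOpen_ne.mem_nhds hy
    filter_upwards [nhdsWithin_le_nhds hne, nhdsWithin_le_nhds hy0, self_mem_nhdsWithin]
      with y h2 h3 h4
    refine (th_zpow hq0 hq h3 (-m)).not.1 ?_
    rw [th_eq hq, mul_assoc]
    refine mul_ne_zero ?_ h2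
    rw [sub_ne_zero]
    intro h5
    apply h4
    simp only [Set.mem_singleton_iff]
    rw [zpow_neg] at h5
    field_simp at h5
    exact h5.symm
  · exact nhdsWithin_le_nhds ((th_differentiableAt hq hy).continuousAt.eventually_ne h)

/-! ### Locally uniform summability -/

/-- A ratio test that is uniform in a parameter. -/
lemma ratio_bound {P : Type*} [TopologicalSpace P] {p₀ : P} (f : ℕ → P → ℂ)
    (hf : ∀ n, ContinuousAt (f n) p₀) (R : P × ℂ → ℂ) (hR : ContinuousAt R (p₀, 0))
    (hR1 : ‖R (p₀, 0)‖ < 1) (z : P × ℕ → ℂ) (hz : Tendsto z (𝓝 p₀ ×ˢ atTop) (𝓝 0))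
    (hrec : ∀ᶠ pn in 𝓝 p₀ ×ˢ atTop, f (pn.2 + 1) pn.1 = R (pn.1, z pn) * f pn.2 pn.1) :
    ∃ u : ℕ → ℝ, Summable u ∧ ∀ᶠ p in 𝓝 p₀, ∀ n, ‖f n p‖ ≤ u n := by
  obtain ⟨ρ, hρ, hρ1⟩ := exists_between hR1
  have hρ0 : 0 < ρ := (norm_nonneg _).trans_lt hρ
  have h1 : Tendsto (fun pn : P × ℕ => (pn.1, z pn)) (𝓝 p₀ ×ˢ atTop) (𝓝 (p₀, 0)) := by
    rw [nhds_prod_eq]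
    exact tendsto_fst.prodMk hz
  have h2 : ∀ᶠ pn in 𝓝 p₀ ×ˢ atTop, ‖R (pn.1, z pn)‖ < ρ :=
    ((hR.tendsto.comp h1).norm).eventually_lt_const hρ
  obtain ⟨pa, hpa, pb, hpb, H⟩ := eventually_prod_iff.1 (h2.and hrec)
  obtain ⟨N, hN⟩ := eventually_atTop.1 hpb
  set c : ℕ → ℝ := fun n => ‖f n p₀‖ + 1 with hc
  have hc0 : ∀ n, 0 ≤ c n := fun n => by positivity
  have h3 : ∀ᶠ p in 𝓝 p₀, ∀ n ∈ Finset.range (N + 1), ‖f n p‖ < c n := by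
    rw [Finset.eventually_all]
    intro n _
    exact (hf n).norm.eventually_lt_const (by simp [hc])
  set C : ℝ := (∑ m ∈ Finset.range (N + 1), c m) / ρ ^ N with hC
  have hC0 : 0 ≤ C := div_nonneg (Finset.sum_nonneg fun n _ => hc0 n) (by positivity)
  refine ⟨fun n => C * ρ ^ n, (summable_geometric_of_lt_one hρ0.le hρ1).mul_left _, ?_⟩
  filter_upwards [hpa, h3] with p hp1 hp2 n
  have small : ∀ n, n ≤ N → ‖f n p‖ ≤ C * ρ ^ n := fun n hn => by
    calc ‖f n p‖ ≤ c n := (hp2 n (by simp; omega)).le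
      _ ≤ ∑ m ∈ Finset.range (N + 1), c m :=
        Finset.single_le_sum (fun n _ => hc0 n) (by simp; omega)
      _ = C * ρ ^ N := by rw [hC]; field_simp
      _ ≤ C * ρ ^ n := by
        gcongr ?_ * ?_
        exact pow_le_pow_of_le_one hρ0.le hρ1.le hn
  induction n with
  | zero => exact small 0 (Nat.zero_le _)
  | succ n ih =>
    by_cases hn : n + 1 ≤ N
    · exact small _ hn
    · obtain ⟨h4, h5⟩ := H hp1 (hN n (by omega))
      simp only at h4 h5
      rw [h5, norm_mul, pow_succ]
      calc _ ≤ ρ * (C * ρ ^ n) := by gcongr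
        _ = _ := by ring

/-- Two one-sided majorants of a family indexed by `ℤ` combine to a summable one. -/
lemma int_bound {P : Type*} [TopologicalSpace P] {p₀ : P} (f : ℤ → P → ℂ)
    (h1 : ∃ u : ℕ → ℝ, Summable u ∧ ∀ᶠ p in 𝓝 p₀, ∀ n : ℕ, ‖f n p‖ ≤ u n)
    (h2 : ∃ u : ℕ → ℝ, Summable u ∧ ∀ᶠ p in 𝓝 p₀, ∀ n : ℕ, ‖f (-n) p‖ ≤ u n) :
    ∃ u : ℤ → ℝ, Summable u ∧ ∀ᶠ p in 𝓝 p₀, ∀ n, ‖f n p‖ ≤ u n := by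
  obtain ⟨u, hu, hup⟩ := h1
  obtain ⟨v, hv, hvp⟩ := h2
  have hu0 : ∀ n, 0 ≤ u n := fun n => (norm_nonneg _).trans (hup.self_of_nhds n)
  have hv0 : ∀ n, 0 ≤ v n := fun n => (norm_nonneg _).trans (hvp.self_of_nhds n)
  refine ⟨fun n => u n.natAbs + v n.natAbs, ?_, ?_⟩
  · refine Summable.of_nat_of_neg ?_ ?_ <;> simpa using hu.add hv
  · filter_upwards [hup, hvp] with p h3 h4 n
    obtain ⟨m, rfl | rfl⟩ := n.eq_nat_or_neg
    · simpa using (h3 m).trans (le_add_of_nonneg_right (hv0 m))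
    · simpa using (h4 m).trans (le_add_of_nonneg_left (hu0 m))

/-- `z ^ s ∏ⱼ (αⱼ z)_∞ / (bⱼ z)_∞`: the one-variable weight times a power of the variable.
The parameter `αⱼ` stands for `q / aⱼ`, so that `aⱼ = ∞` becomes the regular point `αⱼ = 0`. -/
noncomputable def tm {m : ℕ} (q : ℂ) (α b : Fin m → ℂ) (s : ℕ) (z : ℂ) : ℂ :=
  z ^ s * ∏ j, qp q (α j * z) / qp q (b j * z)

/-- The moments `∑_ν tm (x q^ν)` of the one-variable weight along the `q`-lattice through `x`. -/
noncomputable def ph {m : ℕ} (q : ℂ) (α b : Fin m → ℂ) (s : ℕ) (x : ℂ) : ℂ :=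
  ∑' ν : ℤ, tm q α b s (x * q ^ ν)

lemma tm_step_pos {m : ℕ} {q : ℂ} (hq : ‖q‖ < 1) (α b : Fin m → ℂ) (s : ℕ) (z : ℂ)
    (h1 : ∀ j, 1 - α j * z ≠ 0) (h2 : ∀ j, 1 - b j * z ≠ 0) :
    tm q α b s (z * q) = (q ^ s * ∏ j, (1 - b j * z) / (1 - α j * z)) * tm q α b s z := by
  have h : ∀ j, qp q (α j * (z * q)) / qp q (b j * (z * q)) =
      (1 - b j * z) / (1 - α j * z) * (qp q (α j * z) / qp q (b j * z)) := fun j => by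
    rw [qp_step hq (α j * z), qp_step hq (b j * z), div_mul_div_comm,
      mul_left_comm (1 - b j * z), mul_div_mul_left _ _ (h1 j), mul_div_mul_left _ _ (h2 j)]
    congr 2 <;> ring
  simp only [tm, h, Finset.prod_mul_distrib]
  ring

lemma tm_step_neg {m : ℕ} {q : ℂ} (hq0 : q ≠ 0) (hq : ‖q‖ < 1) (α b : Fin m → ℂ) (s : ℕ) {z : ℂ}
    (hz : z ≠ 0) :
    tm q α b s (z * q⁻¹) =
      (q⁻¹ ^ s * ∏ j, (q * z⁻¹ - α j) / (q * z⁻¹ - b j)) * tm q α b s z := by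
  have h : ∀ j, qp q (α j * (z * q⁻¹)) / qp q (b j * (z * q⁻¹)) =
      (q * z⁻¹ - α j) / (q * z⁻¹ - b j) * (qp q (α j * z) / qp q (b j * z)) := fun j => by
    have e : ∀ c : ℂ, qp q (c * (z * q⁻¹)) = (z * q⁻¹) * ((q * z⁻¹ - c) * qp q (c * z)) := fun c => by
      rw [qp_step hq (c * (z * q⁻¹)), show q * (c * (z * q⁻¹)) = c * z by field_simp]
      field_simp
    rw [e, e, mul_div_mul_left _ _ (by positivity), div_mul_div_comm]
  simp only [tm, h, Finset.prod_mul_distrib]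
  ring

section
variable {m : ℕ} {q : ℂ} (hq0 : q ≠ 0) (hq : ‖q‖ < 1) {α₀ b₀ : Fin m → ℂ} {x₀ : ℂ} (hx₀ : x₀ ≠ 0)
  (hb₀ : ∀ j, b₀ j ≠ 0) (hreg : ∀ j, th q (x₀ * b₀ j) ≠ 0)
include hq0 hq hx₀ hb₀ hreg

lemma tm_continuousAt (s : ℕ) (ν : ℤ) :
    ContinuousAt (fun p : (Fin m → ℂ) × (Fin m → ℂ) × ℂ =>
      tm q p.1 p.2.1 s (p.2.2 * q ^ ν)) (α₀, b₀, x₀) := by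
  have hc := qp_continuous hq
  unfold tm
  refine ContinuousAt.mul (by fun_prop) ?_
  refine tendsto_finsetProd _ fun j _ => ?_
  refine ContinuousAt.div (by fun_prop) (by fun_prop) ?_
  exact qp_ne_zero_of_th hq0 hq hx₀ (hb₀ j) (hreg j) ν

/-- A majorant on the half-lattice tending to `0`, uniform near the given parameters. The factor
`z ^ s` with `s ≠ 0` makes the ratio of consecutive terms tend to `q ^ s`. -/
lemma tm_bound_pos {s : ℕ} (hs : s ≠ 0) :
    ∃ u : ℕ → ℝ, Summable u ∧ ∀ᶠ p in 𝓝 (α₀, b₀, x₀), ∀ n : ℕ,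
      ‖tm q p.1 p.2.1 s (p.2.2 * q ^ (n : ℤ))‖ ≤ u n := by
  have hz : Tendsto (fun pn : ((Fin m → ℂ) × (Fin m → ℂ) × ℂ) × ℕ => pn.1.2.2 * q ^ (pn.2 : ℤ))
      (𝓝 (α₀, b₀, x₀) ×ˢ atTop) (𝓝 0) := by
    have h1 : Tendsto (fun pn : ((Fin m → ℂ) × (Fin m → ℂ) × ℂ) × ℕ => pn.1.2.2)
      (𝓝 (α₀, b₀, x₀) ×ˢ atTop) (𝓝 x₀) :=
      (continuous_snd.snd.tendsto (α₀, b₀, x₀)).comp tendsto_fst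
    have h2 := (tendsto_pow_atTop_nhds_zero_of_norm_lt_one hq).comp
      (tendsto_snd (f := 𝓝 (α₀, b₀, x₀)) (g := (atTop : Filter ℕ)))
    simpa using h1.mul h2
  have hRc : ContinuousAt (fun pz : ((Fin m → ℂ) × (Fin m → ℂ) × ℂ) × ℂ =>
      q ^ s * ∏ j, (1 - pz.1.2.1 j * pz.2) / (1 - pz.1.1 j * pz.2)) ((α₀, b₀, x₀), 0) := by
    refine ContinuousAt.mul continuousAt_const (tendsto_finsetProd _ fun j _ => ?_)
    exact ContinuousAt.div (by fun_prop) (by fun_prop) (by simp)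
  refine ratio_bound (p₀ := (α₀, b₀, x₀))
    (fun (n : ℕ) (p : (Fin m → ℂ) × (Fin m → ℂ) × ℂ) => tm q p.1 p.2.1 s (p.2.2 * q ^ (n : ℤ)))
    (fun n => tm_continuousAt hq0 hq hx₀ hb₀ hreg s n)
    (fun pz => q ^ s * ∏ j, (1 - pz.1.2.1 j * pz.2) / (1 - pz.1.1 j * pz.2)) hRc ?_ _ hz ?_
  · simpa using pow_lt_one₀ (norm_nonneg _) hq hs
  · have h1 : Tendsto (fun pn : ((Fin m → ℂ) × (Fin m → ℂ) × ℂ) × ℕ =>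
        (pn.1, pn.1.2.2 * q ^ (pn.2 : ℤ))) (𝓝 (α₀, b₀, x₀) ×ˢ atTop) (𝓝 ((α₀, b₀, x₀), 0)) := by
      exact tendsto_fst.prodMk_nhds hz
    have h2 : ∀ᶠ pz : ((Fin m → ℂ) × (Fin m → ℂ) × ℂ) × ℂ in 𝓝 ((α₀, b₀, x₀), 0),
        ∀ j, 1 - pz.1.1 j * pz.2 ≠ 0 := eventually_all.2 fun j =>
      ContinuousAt.eventually_ne (g := fun pz : ((Fin m → ℂ) × (Fin m → ℂ) × ℂ) × ℂ =>
        1 - pz.1.1 j * pz.2) (by fun_prop) (by simp)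
    have h3 : ∀ᶠ pz : ((Fin m → ℂ) × (Fin m → ℂ) × ℂ) × ℂ in 𝓝 ((α₀, b₀, x₀), 0),
        ∀ j, 1 - pz.1.2.1 j * pz.2 ≠ 0 := eventually_all.2 fun j =>
      ContinuousAt.eventually_ne (g := fun pz : ((Fin m → ℂ) × (Fin m → ℂ) × ℂ) × ℂ =>
        1 - pz.1.2.1 j * pz.2) (by fun_prop) (by simp)
    filter_upwards [h1.eventually h2, h1.eventually h3] with pn h4 h5
    rw [← tm_step_pos hq _ _ _ _ h4 h5]
    congr 1
    push_cast
    rw [zpow_add_one₀ hq0, mul_assoc]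

/-- A majorant on the half-lattice tending to `∞`, uniform near the given parameters. The ratio of
consecutive terms tends to `q ^ (-s) ∏ⱼ αⱼ / bⱼ`, which is where `hdom` is needed. -/
lemma tm_bound_neg {s : ℕ} (hdom : ‖∏ j, α₀ j‖ < ‖q‖ ^ s * ‖∏ j, b₀ j‖) :
    ∃ u : ℕ → ℝ, Summable u ∧ ∀ᶠ p in 𝓝 (α₀, b₀, x₀), ∀ n : ℕ,
      ‖tm q p.1 p.2.1 s (p.2.2 * q ^ (-n : ℤ))‖ ≤ u n := by
  have hz : Tendsto (fun pn : ((Fin m → ℂ) × (Fin m → ℂ) × ℂ) × ℕ =>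
      (pn.1.2.2 * q ^ (-(pn.2 : ℤ)))⁻¹)
      (𝓝 (α₀, b₀, x₀) ×ˢ atTop) (𝓝 0) := by
    have h1 : Tendsto (fun pn : ((Fin m → ℂ) × (Fin m → ℂ) × ℂ) × ℕ => pn.1.2.2)
      (𝓝 (α₀, b₀, x₀) ×ˢ atTop) (𝓝 x₀) :=
      (continuous_snd.snd.tendsto (α₀, b₀, x₀)).comp tendsto_fst
    have h2 := (tendsto_pow_atTop_nhds_zero_of_norm_lt_one hq).comp
      (tendsto_snd (f := 𝓝 (α₀, b₀, x₀)) (g := (atTop : Filter ℕ)))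
    simpa [Function.comp_def] using h2.mul (h1.inv₀ hx₀)
  have hRc : ContinuousAt (fun pz : ((Fin m → ℂ) × (Fin m → ℂ) × ℂ) × ℂ =>
      q⁻¹ ^ s * ∏ j, (q * pz.2 - pz.1.1 j) / (q * pz.2 - pz.1.2.1 j)) ((α₀, b₀, x₀), 0) := by
    refine ContinuousAt.mul continuousAt_const (tendsto_finsetProd _ fun j _ => ?_)
    exact ContinuousAt.div (by fun_prop) (by fun_prop) (by simpa using hb₀ j)
  refine ratio_bound (p₀ := (α₀, b₀, x₀))
    (fun (n : ℕ) (p : (Fin m → ℂ) × (Fin m → ℂ) × ℂ) => tm q p.1 p.2.1 s (p.2.2 * q ^ (-n : ℤ)))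
    (fun n => tm_continuousAt hq0 hq hx₀ hb₀ hreg s _)
    (fun pz => q⁻¹ ^ s * ∏ j, (q * pz.2 - pz.1.1 j) / (q * pz.2 - pz.1.2.1 j)) hRc ?_ _ hz ?_
  · have hB : 0 < ‖∏ j, b₀ j‖ := norm_pos_iff.2 (Finset.prod_ne_zero_iff.2 fun j _ => hb₀ j)
    have hqs : 0 < ‖q‖ ^ s := pow_pos (norm_pos_iff.2 hq0) s
    simp only [mul_zero, zero_sub, neg_div_neg_eq, Finset.prod_div_distrib, norm_mul, norm_div,
      norm_pow, norm_inv]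
    rw [inv_pow, inv_mul_lt_iff₀ hqs, mul_one, div_lt_iff₀ hB]
    exact hdom
  · have h2 : ∀ᶠ p : (Fin m → ℂ) × (Fin m → ℂ) × ℂ in 𝓝 (α₀, b₀, x₀), p.2.2 ≠ 0 :=
      ContinuousAt.eventually_ne (g := fun p : (Fin m → ℂ) × (Fin m → ℂ) × ℂ =>
        p.2.2) (by fun_prop) hx₀
    filter_upwards [tendsto_fst.eventually h2] with pn h4
    rw [← tm_step_neg hq0 hq _ _ _ (by positivity)]
    congr 1
    push_cast
    rw [neg_add, ← sub_eq_add_neg, zpow_sub_one₀ hq0, mul_assoc]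

/-- A locally uniform summable majorant for the terms of the moment series; continuity and
holomorphy of the moments follow from it. -/
lemma tm_bound {s : ℕ} (hs : s ≠ 0) (hdom : ‖∏ j, α₀ j‖ < ‖q‖ ^ s * ‖∏ j, b₀ j‖) :
    ∃ u : ℤ → ℝ, Summable u ∧ ∀ᶠ p in 𝓝 (α₀, b₀, x₀), ∀ n,
      ‖tm q p.1 p.2.1 s (p.2.2 * q ^ n)‖ ≤ u n :=
  int_bound (fun n (p : (Fin m → ℂ) × (Fin m → ℂ) × ℂ) => tm q p.1 p.2.1 s (p.2.2 * q ^ n))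
    (tm_bound_pos hq0 hq hx₀ hb₀ hreg hs) (tm_bound_neg hq0 hq hx₀ hb₀ hreg hdom)

lemma tm_summable {s : ℕ} (hs : s ≠ 0) (hdom : ‖∏ j, α₀ j‖ < ‖q‖ ^ s * ‖∏ j, b₀ j‖) :
    Summable fun ν : ℤ => ‖tm q α₀ b₀ s (x₀ * q ^ ν)‖ := by
  obtain ⟨u, hu, h⟩ := tm_bound hq0 hq hx₀ hb₀ hreg hs hdom
  exact Summable.of_nonneg_of_le (fun _ => norm_nonneg _) h.self_of_nhds hu

lemma ph_continuousAt {s : ℕ} (hs : s ≠ 0) (hdom : ‖∏ j, α₀ j‖ < ‖q‖ ^ s * ‖∏ j, b₀ j‖) :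
    ContinuousAt (fun p : (Fin m → ℂ) × (Fin m → ℂ) × ℂ => ph q p.1 p.2.1 s p.2.2)
      (α₀, b₀, x₀) := by
  obtain ⟨u, hu, h⟩ := tm_bound hq0 hq hx₀ hb₀ hreg hs hdom
  exact tendsto_tsum_of_dominated_convergence hu
    (fun ν => tm_continuousAt hq0 hq hx₀ hb₀ hreg s ν) h

lemma ph_differentiableAt {s : ℕ} (hs : s ≠ 0) (hdom : ‖∏ j, α₀ j‖ < ‖q‖ ^ s * ‖∏ j, b₀ j‖) :
    DifferentiableAt ℂ (fun y => ph q α₀ b₀ s y) x₀ := by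
  obtain ⟨u, hu, h⟩ := tm_bound hq0 hq hx₀ hb₀ hreg hs hdom
  have hc : ContinuousAt (fun y : ℂ => (α₀, b₀, y)) x₀ := by fun_prop
  have h1 := hc.tendsto.eventually h
  have h2 : ∀ᶠ y in 𝓝 x₀, y ≠ 0 := isOpen_ne.mem_nhds hx₀
  have h3 : ∀ᶠ y in 𝓝 x₀, ∀ j, th q (y * b₀ j) ≠ 0 := eventually_all.2 fun j => by
    refine ContinuousAt.eventually_ne (g := fun y => th q (y * b₀ j)) ?_ (hreg j)
    exact ContinuousAt.comp (g := th q)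
      (th_differentiableAt hq (mul_ne_zero hx₀ (hb₀ j))).continuousAt (by fun_prop)
  obtain ⟨V, hV, hVo, hxV⟩ := eventually_nhds_iff.1 (h1.and (h2.and h3))
  have hd := qp_differentiable hq
  refine (Complex.differentiableOn_tsum_of_summable_norm hu (fun ν => ?_) hVo
    (fun ν y hy => (hV y hy).1 ν)).differentiableAt (hVo.mem_nhds hxV)
  intro y hy
  refine DifferentiableAt.differentiableWithinAt ?_
  unfold tm
  refine DifferentiableAt.mul (by fun_prop) ?_
  refine DifferentiableAt.fun_finsetProd fun j _ => ?_
  refine DifferentiableAt.div ?_ ?_ ?_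
  · exact (hd _).comp y (f := fun y => α₀ j * (y * q ^ ν)) (by fun_prop)
  · exact (hd _).comp y (f := fun y => b₀ j * (y * q ^ ν)) (by fun_prop)
  · exact qp_ne_zero_of_th hq0 hq (hV y hy).2.1 (hb₀ j) ((hV y hy).2.2 j) ν

end

/-! ### The contiguity relation in the parameters `α` -/

lemma tm_zero_mul {m : ℕ} (q : ℂ) (α b : Fin m → ℂ) (s : ℕ) (z : ℂ) :
    z ^ s * tm q α b 0 z = tm q α b s z := by
  simp [tm]

/-- Telescoping of `∑_ν (ψ(x q^ν) - ψ(x q^(ν+1)))` over all integers. -/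
lemma hasSum_int_telescope {f : ℤ → ℂ} {a c S : ℂ} (hS : HasSum (fun ν => f ν - f (ν + 1)) S)
    (h1 : Tendsto (fun n : ℕ => f (-n)) atTop (𝓝 a)) (h2 : Tendsto (fun n : ℕ => f n) atTop (𝓝 c)) :
    S = a - c := by
  have h3 : Tendsto (fun N : ℕ => Finset.Ico (-(N : ℤ)) N) atTop atTop := by
    have := tendsto_Ico_neg_atTop_atTop (α := ℤ)
    exact this.comp tendsto_natCast_atTop_atTop
  have h4 := hS.comp h3
  have h5 : ∀ N : ℕ, ∑ ν ∈ Finset.Ico (-(N : ℤ)) N, (f ν - f (ν + 1)) = f (-N) - f N := by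
    intro N
    induction N with
    | zero => simp
    | succ N ih =>
      rw [show Finset.Ico (-((N + 1 : ℕ) : ℤ)) ((N + 1 : ℕ) : ℤ)
        = insert (-(N : ℤ) - 1) (insert (N : ℤ) (Finset.Ico (-(N : ℤ)) N)) by
          ext k; simp; omega]
      rw [Finset.sum_insert (by simp), Finset.sum_insert (by simp), ih]
      push_cast
      rw [show -(N : ℤ) - 1 + 1 = -N by ring, show -((N : ℤ) + 1) = -N - 1 by ring]
      ring
  exact tendsto_nhds_unique (h4.congr h5) (h1.sub h2)

/-- The polynomial `∏ⱼ (1 - αⱼ X / q) - ∏ⱼ (1 - bⱼ X)`, whose product with the weight is a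
`q`-difference. -/
noncomputable def Pol {m : ℕ} (q : ℂ) (α b : Fin m → ℂ) : Polynomial ℂ :=
  ∏ j, (1 - Polynomial.C (q⁻¹ * α j) * Polynomial.X) - ∏ j, (1 - Polynomial.C (b j) * Polynomial.X)

lemma Pol_eval {m : ℕ} (q : ℂ) (α b : Fin m → ℂ) (z : ℂ) :
    (Pol q α b).eval z = ∏ j, (1 - q⁻¹ * α j * z) - ∏ j, (1 - b j * z) := by
  simp [Pol, Polynomial.eval_prod]

lemma natDegree_lin (c : ℂ) : (1 - Polynomial.C c * Polynomial.X : Polynomial ℂ).natDegree ≤ 1 := by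
  compute_degree

lemma Pol_natDegree {m : ℕ} (q : ℂ) (α b : Fin m → ℂ) : (Pol q α b).natDegree ≤ m := by
  have h : ∀ c : Fin m → ℂ,
      (∏ j, (1 - Polynomial.C (c j) * Polynomial.X) : Polynomial ℂ).natDegree ≤ m := fun c => by
    refine (Polynomial.natDegree_prod_le _ _).trans ?_
    refine (Finset.sum_le_card_nsmul _ _ 1 fun j _ => natDegree_lin _).trans ?_
    simp
  exact (Polynomial.natDegree_sub_le _ _).trans (max_le (h _) (h _))

lemma Pol_coeff_zero {m : ℕ} (q : ℂ) (α b : Fin m → ℂ) : (Pol q α b).coeff 0 = 0 := by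
  rw [Polynomial.coeff_zero_eq_eval_zero, Pol_eval]; simp

lemma Pol_coeff_top {m : ℕ} (q : ℂ) (α b : Fin m → ℂ) :
    (Pol q α b).coeff m = ∏ j, (-(q⁻¹ * α j)) - ∏ j, (-b j) := by
  have h : ∀ c : Fin m → ℂ,
      (∏ j, (1 - Polynomial.C (c j) * Polynomial.X) : Polynomial ℂ).coeff m = ∏ j, (-c j) := by
    intro c
    have := Polynomial.coeff_prod_of_natDegree_le (s := Finset.univ)
      (fun j => (1 - Polynomial.C (c j) * Polynomial.X : Polynomial ℂ)) 1
      (fun j _ => natDegree_lin _)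
    simpa [Polynomial.coeff_one] using this
  rw [Pol, Polynomial.coeff_sub, h, h]

lemma Pol_eval_sum {m : ℕ} (q : ℂ) (α b : Fin m → ℂ) (z : ℂ) :
    (Pol q α b).eval z = ∑ k ∈ Finset.range m, (Pol q α b).coeff (k + 1) * z ^ (k + 1) := by
  rw [Polynomial.eval_eq_sum_range' (n := m + 1) (Nat.lt_succ_of_le (Pol_natDegree q α b)),
    Finset.sum_range_succ', Pol_coeff_zero]
  simp

section
variable {m : ℕ} {q : ℂ} (hq0 : q ≠ 0) (hq : ‖q‖ < 1) {α b : Fin m → ℂ} {x : ℂ} (hx : x ≠ 0)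
  (hb : ∀ j, b j ≠ 0) (hreg : ∀ j, th q (x * b j) ≠ 0)
include hq0 hq hx hb hreg

/-- The moments satisfy an inhomogeneous linear relation with coefficients independent of `x`:
the sum of a `q`-difference over a bilateral lattice is the difference of its limits. -/
lemma moment_relation (hdom : ‖∏ j, α j‖ < ‖q‖ ^ m * ‖∏ j, b j‖) :
    ∑ k ∈ Finset.range m, (Pol q α b).coeff (k + 1) * ph q α b (k + 1) x = -1 := by
  have hsum : ∀ k ∈ Finset.range m, HasSum
      (fun ν : ℤ => (Pol q α b).coeff (k + 1) * tm q α b (k + 1) (x * q ^ ν))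
      ((Pol q α b).coeff (k + 1) * ph q α b (k + 1) x) := by
    intro k hk
    refine HasSum.mul_left _ (Summable.hasSum (Summable.of_norm ?_))
    refine tm_summable hq0 hq hx hb hreg (by simp) (hdom.trans_le ?_)
    gcongr ?_ * _
    exact pow_le_pow_of_le_one (norm_nonneg _) hq.le (by simpa using hk)
  -- The telescoping function is `∏ⱼ (αⱼ z / q)_∞ / (bⱼ z)_∞`: limit `0` at infinity, `1` at `z = 0`.
  have hS := hasSum_sum hsum
  have hβ : ‖∏ j, q⁻¹ * α j‖ < ‖q‖ ^ 0 * ‖∏ j, b j‖ := by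
    have hqs : 0 < ‖q‖ ^ m := pow_pos (norm_pos_iff.2 hq0) m
    rw [Finset.prod_mul_distrib]
    simp only [Finset.prod_const, Finset.card_univ, Fintype.card_fin, inv_pow, norm_mul, norm_inv,
      norm_pow, pow_zero, one_mul]
    rw [inv_mul_lt_iff₀ hqs]
    exact hdom
  have hlim1 : Tendsto (fun n : ℕ => tm q (fun j => q⁻¹ * α j) b 0 (x * q ^ (-n : ℤ)))
      atTop (𝓝 0) := by
    obtain ⟨u, hu, h⟩ := tm_bound_neg hq0 hq hx hb hreg hβ
    exact squeeze_zero_norm h.self_of_nhds hu.tendsto_atTop_zero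
  have hlim2 : Tendsto (fun n : ℕ => tm q (fun j => q⁻¹ * α j) b 0 (x * q ^ (n : ℤ)))
      atTop (𝓝 1) := by
    have hc := qp_continuous hq
    have h1 : ContinuousAt (fun z => tm q (fun j => q⁻¹ * α j) b 0 z) 0 := by
      unfold tm
      refine ContinuousAt.mul (by fun_prop) (tendsto_finsetProd _ fun j _ => ?_)
      exact ContinuousAt.div (by fun_prop) (by fun_prop) (by simp [qp_zero])
    have h2 : tm q (fun j => q⁻¹ * α j) b 0 0 = 1 := by simp [tm, qp_zero]
    have h3 : Tendsto (fun n : ℕ => x * q ^ (n : ℤ)) atTop (𝓝 0) := by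
      simpa using (tendsto_pow_atTop_nhds_zero_of_norm_lt_one hq).const_mul x
    have := h1.tendsto.comp h3
    rwa [h2] at this
  have := hasSum_int_telescope (f := fun ν : ℤ => tm q (fun j => q⁻¹ * α j) b 0 (x * q ^ ν))
    (hS.congr_fun fun ν => ?_) hlim1 hlim2
  · rw [this]; ring
  · have hz : ∀ j, qp q (b j * (x * q ^ ν)) ≠ 0 := fun j =>
      qp_ne_zero_of_th hq0 hq hx (hb j) (hreg j) ν
    rw [zpow_add_one₀ hq0, ← mul_assoc]
    set z := x * q ^ ν
    have e1 : tm q (fun j => q⁻¹ * α j) b 0 z = (∏ j, (1 - q⁻¹ * α j * z)) * tm q α b 0 z := by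
      simp only [tm, pow_zero, one_mul, ← Finset.prod_mul_distrib]
      refine Finset.prod_congr rfl fun j _ => ?_
      rw [qp_step hq, show q * (q⁻¹ * α j * z) = α j * z by field_simp]
      ring
    have e2 : tm q (fun j => q⁻¹ * α j) b 0 (z * q) = (∏ j, (1 - b j * z)) * tm q α b 0 z := by
      simp only [tm, pow_zero, one_mul, ← Finset.prod_mul_distrib]
      refine Finset.prod_congr rfl fun j _ => ?_
      have h1 := hz j
      rw [qp_step hq] at h1
      have h2 := left_ne_zero_of_mul h1
      rw [qp_step hq (b j * z), show q⁻¹ * α j * (z * q) = α j * z by field_simp,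
        show b j * (z * q) = q * (b j * z) by ring, ← mul_div_assoc, mul_div_mul_left _ _ h2]
    rw [e1, e2, ← sub_mul, ← Pol_eval, Pol_eval_sum, Finset.sum_mul]
    refine Finset.sum_congr rfl fun k _ => ?_
    rw [mul_assoc, tm_zero_mul]

end

/-! ### The moment determinant and its `q`-difference equation in `α` -/

/-- The matrix with a first row of ones whose `k`-th row holds the `k`-th moments along the
lattices through `x₀, …, xₙ`. -/
noncomputable def Mx {n : ℕ} (q : ℂ) (α b : Fin (n + 1) → ℂ) (x : Fin (n + 1) → ℂ) :
    Matrix (Fin (n + 1)) (Fin (n + 1)) ℂ :=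
  Matrix.of fun k i => if k = 0 then 1 else ph q α b (k : ℕ) (x i)

lemma prod_update_q {n : ℕ} (q : ℂ) (α : Fin (n + 1) → ℂ) (l : Fin (n + 1)) :
    ∏ j, Function.update α l (q * α l) j = q * ∏ j, α j := by
  rw [Finset.prod_update_of_mem (Finset.mem_univ l), mul_assoc,
    ← Finset.mul_prod_erase Finset.univ α (Finset.mem_univ l), Finset.sdiff_singleton_eq_erase]

/-- The coefficients of `Pol` in reversed order, summed against powers of `α l`. For `α l ≠ 0` this
is `α l ^ (n + 1)` times the value of `Pol` at `1 / α l`, where its first product vanishes. -/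
lemma Pol_reverse_sum {n : ℕ} {q : ℂ} (hq0 : q ≠ 0) (α b : Fin (n + 1) → ℂ) (l : Fin (n + 1)) :
    ∑ i : Fin (n + 1), (Pol q (Function.update α l (q * α l)) b).coeff (n - i + 1) * α l ^ (i : ℕ)
      = - ∏ j, (α l - b j) := by
  set p := Pol q (Function.update α l (q * α l)) b with hp
  by_cases h0 : α l = 0
  · rw [Finset.sum_eq_single 0]
    · have : p.coeff (n + 1) = _ := Pol_coeff_top q _ b
      simp only [Fin.val_zero, Nat.sub_zero, pow_zero, mul_one, this]
      rw [Finset.prod_eq_zero (Finset.mem_univ l) (by rw [Function.update_self, h0, mul_zero, mul_zero, neg_zero]), h0]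
      simp only [zero_sub]
    · intro i _ hi
      have : (i : ℕ) ≠ 0 := fun h => hi (Fin.ext h)
      simp [h0, this]
    · simp
  · have h1 := Pol_eval_sum q (Function.update α l (q * α l)) b (α l)⁻¹
    rw [← hp] at h1
    have h2 : p.eval (α l)⁻¹ * α l ^ (n + 1) = - ∏ j, (α l - b j) := by
      rw [hp, Pol_eval, Finset.prod_eq_zero (Finset.mem_univ l) (by simp; field_simp; simp),
        zero_sub, neg_mul]
      congr 1
      have : ∏ j : Fin (n + 1), α l = α l ^ (n + 1) := by simp
      rw [← this, ← Finset.prod_mul_distrib]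
      refine Finset.prod_congr rfl fun j _ => ?_
      field_simp
    rw [← h2, h1, Finset.sum_mul, ← Finset.sum_range_reflect, Finset.sum_range]
    refine Finset.sum_congr rfl fun i _ => ?_
    have hi : (i : ℕ) ≤ n := by omega
    obtain ⟨k, hk⟩ := Nat.exists_eq_add_of_le hi
    rw [show n + 1 - 1 - (i : ℕ) = k by omega, show n - (i : ℕ) = k by omega,
      show α l ^ (n + 1) = α l ^ (k + 1) * α l ^ (i : ℕ) by rw [← pow_add]; congr 1; omega, mul_assoc, inv_pow, ← mul_assoc _⁻¹,
      inv_mul_cancel₀ (pow_ne_zero _ h0), one_mul]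

section
variable {n : ℕ} {q : ℂ} (hq0 : q ≠ 0) (hq : ‖q‖ < 1) {α b x : Fin (n + 1) → ℂ}
  (hx : ∀ i, x i ≠ 0) (hb : ∀ j, b j ≠ 0) (hreg : ∀ i j, th q (x i * b j) ≠ 0)
include hq0 hq hx hb hreg

/-- Contiguity: `(α z)_∞ = (1 - α z) (q α z)_∞` expresses the moments for `α` through those for the
parameters with `α l` replaced by `q α l`. -/
lemma ph_contiguous (l : Fin (n + 1)) {s : ℕ} (hs : s ≠ 0)
    (hdom : ‖∏ j, α j‖ < ‖q‖ ^ s * ‖∏ j, b j‖) (i : Fin (n + 1)) :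
    ph q α b s (x i) = ph q (Function.update α l (q * α l)) b s (x i)
      - α l * ph q (Function.update α l (q * α l)) b (s + 1) (x i) := by
  have hn : 0 < ‖q‖ := norm_pos_iff.2 hq0
  have h1 : ‖∏ j, Function.update α l (q * α l) j‖ < ‖q‖ ^ (s + 1) * ‖∏ j, b j‖ := by
    rw [prod_update_q, norm_mul, pow_succ', mul_assoc]
    gcongr
  have h2 : ‖∏ j, Function.update α l (q * α l) j‖ < ‖q‖ ^ s * ‖∏ j, b j‖ := by
    refine h1.trans_le ?_
    gcongr ?_ * _
    exact pow_le_pow_of_le_one hn.le hq.le (by simp)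
  have s1 := (tm_summable hq0 hq (hx i) hb (hreg i) hs h2).of_norm
  have s2 := (tm_summable hq0 hq (hx i) hb (hreg i) (s := s + 1) (Nat.succ_ne_zero s) h1).of_norm
  simp only [ph]
  rw [← tsum_mul_left, ← s1.tsum_sub (s2.mul_left _)]
  refine tsum_congr fun ν => ?_
  set z := x i * q ^ ν
  have h3 : ∏ j, qp q (α j * z) / qp q (b j * z) =
      (1 - α l * z) * ∏ j, qp q (Function.update α l (q * α l) j * z) / qp q (b j * z) := by
    rw [← Finset.mul_prod_erase Finset.univ _ (Finset.mem_univ l),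
      ← Finset.mul_prod_erase Finset.univ
        (fun j => qp q (Function.update α l (q * α l) j * z) / qp q (b j * z)) (Finset.mem_univ l),
      qp_step hq (α l * z)]
    have : ∏ j ∈ Finset.univ.erase l, qp q (α j * z) / qp q (b j * z) =
        ∏ j ∈ Finset.univ.erase l,
          qp q (Function.update α l (q * α l) j * z) / qp q (b j * z) := by
      refine Finset.prod_congr rfl fun j hj => ?_
      rw [Function.update_of_ne (Finset.ne_of_mem_erase hj)]
    rw [this, Function.update_self, ← mul_assoc q]
    ring
  simp only [tm, h3, pow_succ]
  ring

/-- Multiplying one parameter `α l` by `q` multiplies the determinant by an explicit factor. -/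
lemma Mx_step (l : Fin (n + 1)) (hdom : ‖∏ j, α j‖ < ‖q‖ ^ n * ‖∏ j, b j‖) :
    (1 - (q ^ n)⁻¹ * (∏ j, α j) / ∏ j, b j) * (Mx q α b x).det =
      (∏ j, (1 - α l / b j)) * (Mx q (Function.update α l (q * α l)) b x).det := by
  have hn : 0 < ‖q‖ := norm_pos_iff.2 hq0
  set α' := Function.update α l (q * α l) with hα'
  have h1 : ‖∏ j, α' j‖ < ‖q‖ ^ (n + 1) * ‖∏ j, b j‖ := by
    rw [prod_update_q, norm_mul, pow_succ', mul_assoc]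
    gcongr
  set p := Pol q α' b with hp
  -- `W` holds the moments for the shifted parameters in decreasing order. Subtracting `α l` times
  -- the preceding row turns every row of `W` but the first into moments for `α`; the result is `B`,
  -- with the same determinant. Replacing the first row of `W`, resp. `B`, by ones gives the shifted,
  -- resp. original, determinant up to a common sign, and `moment_relation` writes the row of ones in
  -- terms of `W`.
  set W : Matrix (Fin (n + 1)) (Fin (n + 1)) ℂ :=
    Matrix.of fun i c => ph q α' b (n - i + 1) (x c) with hW
  set B : Matrix (Fin (n + 1)) (Fin (n + 1)) ℂ :=
    Matrix.of (Fin.cases (W 0) fun i => W i.succ - α l • W i.castSucc) with hB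
  have hB0 : B 0 = W 0 := rfl
  have hBs : ∀ i : Fin n, B i.succ = W i.succ - α l • W i.castSucc := fun i => rfl
  have hdet : W.det = B.det := by
    refine Matrix.det_eq_of_forall_row_eq_smul_add_pred (fun _ => α l) (fun j => by rw [hB0]) ?_
    intro i j
    rw [hBs]; simp
  have hone : (fun _ => (1 : ℂ)) = ∑ i : Fin (n + 1), (-p.coeff (n - i + 1)) • W i := by
    funext c
    have := moment_relation hq0 hq (hx c) hb (hreg c) h1
    rw [← Finset.sum_range_reflect, Finset.sum_range] at this
    simp only [Finset.sum_apply, Pi.smul_apply, smul_eq_mul, neg_mul, Finset.sum_neg_distrib]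
    rw [eq_neg_iff_add_eq_zero, add_comm, ← eq_neg_iff_add_eq_zero, ← this]
    refine Finset.sum_congr rfl fun i _ => ?_
    simp [hW, hp]
  have hsing : ∀ k, ∑ m, (Pi.single k 1 : Fin (n + 1) → ℂ) m • B m = B k := fun k => by
    rw [Finset.sum_eq_single k (fun m _ hm => by simp [hm]) (by simp)]
    simp
  -- Only the coefficient of `B 0` matters once the first row of `B` is replaced.
  have hexp : ∀ i : Fin (n + 1), ∃ d : Fin (n + 1) → ℂ,
      W i = ∑ m, d m • B m ∧ d 0 = α l ^ (i : ℕ) := by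
    intro i
    induction i using Fin.induction with
    | zero => exact ⟨Pi.single 0 1, by rw [hsing, hB0], by simp⟩
    | succ i ih =>
      obtain ⟨d, h1, h2⟩ := ih
      refine ⟨α l • d + Pi.single i.succ 1, ?_, ?_⟩
      · simp only [Pi.add_apply, Pi.smul_apply, add_smul, Finset.sum_add_distrib, smul_assoc,
          ← Finset.smul_sum, ← h1, hsing, hBs]
        simp
      · simp [h2, pow_succ', (Fin.succ_ne_zero i).symm]
  choose d hd hd0 using hexp
  have hone2 : (fun _ => (1 : ℂ)) = ∑ m, (∑ i : Fin (n + 1), (-p.coeff (n - i + 1)) * d i m) • B m := by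
    rw [hone]
    conv_lhs => enter [2, i]; rw [hd i, Finset.smul_sum]
    rw [Finset.sum_comm]
    refine Finset.sum_congr rfl fun m _ => ?_
    simp [Finset.sum_smul, mul_smul]
  have e1 : (W.updateRow 0 fun _ => 1).det = -p.coeff (n + 1) * W.det := by
    rw [hone, Matrix.det_updateRow_sum]
    simp
  have e2 : (B.updateRow 0 fun _ => 1).det = (∏ j, (α l - b j)) * W.det := by
    rw [hone2, Matrix.det_updateRow_sum, hdet, smul_eq_mul]
    congr 1
    rw [← neg_inj, ← Pol_reverse_sum hq0, ← Finset.sum_neg_distrib]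
    refine Finset.sum_congr rfl fun i _ => ?_
    rw [hd0]; ring
  have f1 : (Mx q α' b x).submatrix (Equiv.neg (Fin (n + 1))) id = W.updateRow 0 fun _ => 1 := by
    ext i c
    refine Fin.cases ?_ (fun i => ?_) i
    · simp [Mx]
    · have hne : -i.succ ≠ 0 := by simp
      have hv : ((-i.succ : Fin (n + 1)) : ℕ) = n - (i.succ : Fin (n + 1)) + 1 := by
        rw [Fin.val_neg, if_neg (Fin.succ_ne_zero i)]
        simp; omega
      rw [Matrix.updateRow_ne (Fin.succ_ne_zero i)]
      simp only [Matrix.submatrix_apply, Equiv.neg_apply, id, Mx, Matrix.of_apply, if_neg hne, hv, hW]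
  have f2 : (Mx q α b x).submatrix (Equiv.neg (Fin (n + 1))) id = B.updateRow 0 fun _ => 1 := by
    ext i c
    refine Fin.cases ?_ (fun i => ?_) i
    · simp [Mx]
    · have hne : -i.succ ≠ 0 := by simp
      have hv : ((-i.succ : Fin (n + 1)) : ℕ) = n - (i.succ : Fin (n + 1)) + 1 := by
        rw [Fin.val_neg, if_neg (Fin.succ_ne_zero i)]
        simp; omega
      rw [Matrix.updateRow_ne (Fin.succ_ne_zero i)]
      simp only [Matrix.submatrix_apply, Equiv.neg_apply, id, Mx, Matrix.of_apply, if_neg hne, hv,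
        hBs]
      rw [ph_contiguous hq0 hq hx hb hreg l (Nat.succ_ne_zero _)]
      · simp [hW, ← hα']
        left
        congr 1
        omega
      · refine hdom.trans_le ?_
        gcongr ?_ * _
        refine pow_le_pow_of_le_one hn.le hq.le ?_
        simp; omega
  have g1 := Matrix.det_permute (Equiv.neg (Fin (n + 1))) (Mx q α' b x)
  have g2 := Matrix.det_permute (Equiv.neg (Fin (n + 1))) (Mx q α b x)
  rw [f1, e1] at g1
  rw [f2, e2] at g2
  set ε : ℂ := ((Equiv.Perm.sign (Equiv.neg (Fin (n + 1))) : ℤ) : ℂ) with hε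
  have hε0 : ε ≠ 0 := by
    rw [hε]; simp
  have htop : p.coeff (n + 1) = (-1) ^ (n + 1) * ((q ^ n)⁻¹ * (∏ j, α j) - ∏ j, b j) := by
    rw [hp, Pol_coeff_top, Finset.prod_neg, Finset.prod_neg, Finset.prod_mul_distrib,
      prod_update_q]
    simp only [Finset.card_univ, Fintype.card_fin, Finset.prod_const]
    have : q⁻¹ ^ (n + 1) * (q * ∏ j, α j) = (q ^ n)⁻¹ * ∏ j, α j := by
      rw [pow_succ, inv_pow]; field_simp
    rw [this]; ring
  have hBne : ∏ j, b j ≠ 0 := Finset.prod_ne_zero_iff.2 fun j _ => hb j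
  have hfac : ∏ j, (α l - b j) = (-1) ^ (n + 1) * (∏ j, b j) * ∏ j, (1 - α l / b j) := by
    have : ((-1 : ℂ)) ^ (n + 1) = ∏ _j : Fin (n + 1), (-1 : ℂ) := by simp
    rw [this, ← Finset.prod_mul_distrib, ← Finset.prod_mul_distrib]
    refine Finset.prod_congr rfl fun j _ => ?_
    have := hb j
    field_simp
    ring
  have hs : ((-1 : ℂ)) ^ (n + 1) ≠ 0 := pow_ne_zero _ (by norm_num)
  rw [htop] at g1
  rw [hfac] at g2
  apply mul_left_cancel₀ (mul_ne_zero hs (mul_ne_zero hε0 hBne))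
  have e3 : (1 - (q ^ n)⁻¹ * (∏ j, α j) / ∏ j, b j) * ∏ j, b j =
    -((q ^ n)⁻¹ * (∏ j, α j) - ∏ j, b j) := by field_simp; ring
  calc _ = (-1) ^ (n + 1) * ((1 - (q ^ n)⁻¹ * (∏ j, α j) / ∏ j, b j) * ∏ j, b j) *
        (ε * (Mx q α b x).det) := by ring
    _ = (-1) ^ (n + 1) * (∏ j, b j) * (∏ j, (1 - α l / b j)) * (ε * (Mx q α' b x).det) := by
        rw [e3, ← g1, ← g2]; ring
    _ = _ := by ring
end

/-! ### Solving the `q`-difference equation -/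

/-- Two solutions `g`, `h` of the same first-order `q`-difference equation that are continuous at `0`
are proportional along the orbit of `c`; `h` is normalised by `h 0 = 1`. -/
lemma q_iterate {q : ℂ} (hq : ‖q‖ < 1) (g h P : ℂ → ℂ) (c : ℂ)
    (hg : ∀ N : ℕ, g (q ^ N * c) = P (q ^ N * c) * g (q ^ (N + 1) * c))
    (hh : ∀ N : ℕ, h (q ^ N * c) = P (q ^ N * c) * h (q ^ (N + 1) * c))
    (hgc : ContinuousAt g 0) (hhc : ContinuousAt h 0) (h0 : h 0 = 1) :
    g c = h c * g 0 := by
  set F : ℕ → ℂ := fun N => ∏ i ∈ Finset.range N, P (q ^ i * c) with hF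
  have it : ∀ f : ℂ → ℂ, (∀ N : ℕ, f (q ^ N * c) = P (q ^ N * c) * f (q ^ (N + 1) * c)) →
      ∀ N, f c = F N * f (q ^ N * c) := by
    intro f hf N
    induction N with
    | zero => simp [hF]
    | succ N ih => rw [ih, hf N]; simp only [hF, Finset.prod_range_succ]; ring
  have hz : Tendsto (fun N : ℕ => q ^ N * c) atTop (𝓝 0) := by
    simpa using (tendsto_pow_atTop_nhds_zero_of_norm_lt_one hq).mul_const c
  have tg := hgc.tendsto.comp hz
  have th := hhc.tendsto.comp hz
  rw [h0] at th
  have tF : Tendsto F atTop (𝓝 (h c)) := by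
    have h1 : Tendsto (fun N : ℕ => h c / h (q ^ N * c)) atTop (𝓝 (h c)) := by
      have h2 := (tendsto_const_nhds (x := h c)).div th one_ne_zero
      rwa [div_one] at h2
    refine h1.congr' ?_
    filter_upwards [th.eventually_ne one_ne_zero] with N hN
    rw [it h hh N]
    exact mul_div_cancel_right₀ _ hN
  refine tendsto_nhds_unique (tendsto_const_nhds (x := g c) (f := atTop (α := ℕ))) ?_
  refine (tF.mul tg).congr fun N => (it g hg N).symm

section
variable {n : ℕ} {q : ℂ} (hq0 : q ≠ 0) (hq : ‖q‖ < 1) {α b x : Fin (n + 1) → ℂ}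
  (hx : ∀ i, x i ≠ 0) (hb : ∀ j, b j ≠ 0) (hreg : ∀ i j, th q (x i * b j) ≠ 0)
include hq0 hq hx hb hreg

lemma Mx_continuousAt (hdom : ‖∏ j, α j‖ < ‖q‖ ^ n * ‖∏ j, b j‖) :
    ContinuousAt (fun p : (Fin (n + 1) → ℂ) × (Fin (n + 1) → ℂ) => (Mx q p.1 p.2 x).det) (α, b) := by
  have hd : Continuous fun M : Matrix (Fin (n + 1)) (Fin (n + 1)) ℂ => M.det :=
    continuous_id.matrix_det
  refine hd.continuousAt.comp (f := fun p : (Fin (n + 1) → ℂ) × (Fin (n + 1) → ℂ) =>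
    Mx q p.1 p.2 x) ?_
  refine continuousAt_pi.2 fun k => continuousAt_pi.2 fun i => ?_
  by_cases hk : k = 0
  · simp only [Mx, Matrix.of_apply, hk, if_true]
    exact continuousAt_const
  · simp only [Mx, Matrix.of_apply, hk, if_false]
    have hk' : (k : ℕ) ≠ 0 := fun h => hk (Fin.ext h)
    have h1 := ph_continuousAt hq0 hq (hx i) hb (hreg i) hk' (α₀ := α) (hdom.trans_le (by
      gcongr ?_ * _
      exact pow_le_pow_of_le_one (norm_nonneg _) hq.le (by omega)))
    exact ContinuousAt.comp (f := fun p : (Fin (n + 1) → ℂ) × (Fin (n + 1) → ℂ) =>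
      (p.1, p.2, x i)) (x := (α, b)) h1 (by fun_prop)

/-- Iterating `Mx_step` sends the parameter `α l` to `0`. -/
lemma Mx_send_zero (l : Fin (n + 1)) (hdom : ‖∏ j, α j‖ < ‖q‖ ^ n * ‖∏ j, b j‖) :
    (Mx q α b x).det * qp q ((q ^ n)⁻¹ * (∏ j, α j) / ∏ j, b j) =
      (∏ j, qp q (α l / b j)) * ((Mx q (Function.update α l 0) b x).det *
        qp q ((q ^ n)⁻¹ * (∏ j, Function.update α l 0 j) / ∏ j, b j)) := by
  have hn : 0 < ‖q‖ := norm_pos_iff.2 hq0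
  have hc := qp_continuous hq
  have hBne : ∏ j, b j ≠ 0 := Finset.prod_ne_zero_iff.2 fun j _ => hb j
  have hprod : ∀ N : ℕ, ∏ j, Function.update α l (q ^ N * α l) j = q ^ N * ∏ j, α j := fun N => by
    rw [Finset.prod_update_of_mem (Finset.mem_univ l), mul_assoc,
      ← Finset.mul_prod_erase Finset.univ α (Finset.mem_univ l), Finset.sdiff_singleton_eq_erase]
  have key := q_iterate hq
    (fun c => (Mx q (Function.update α l c) b x).det *
      qp q ((q ^ n)⁻¹ * (∏ j, Function.update α l c j) / ∏ j, b j))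
    (fun c => ∏ j, qp q (c / b j)) (fun c => ∏ j, (1 - c / b j)) (α l) ?_ ?_ ?_ ?_ ?_
  · simpa using key
  · intro N
    have hd : ‖∏ j, Function.update α l (q ^ N * α l) j‖ < ‖q‖ ^ n * ‖∏ j, b j‖ := by
      rw [hprod, norm_mul, norm_pow]
      refine lt_of_le_of_lt ?_ hdom
      exact mul_le_of_le_one_left (norm_nonneg _) (pow_le_one₀ hn.le hq.le)
    have h1 := Mx_step hq0 hq hx hb hreg l hd
    simp only [Function.update_self, Function.update_idem, ← mul_assoc] at h1
    rw [show q * q ^ N = q ^ (N + 1) by ring] at h1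
    simp only [hprod] at h1 ⊢
    rw [qp_step hq]
    rw [show q * ((q ^ n)⁻¹ * (q ^ N * ∏ j, α j) / ∏ j, b j) =
      (q ^ n)⁻¹ * (q ^ (N + 1) * ∏ j, α j) / ∏ j, b j by ring]
    rw [mul_left_comm, ← mul_assoc, h1]
    ring
  · intro N
    rw [← Finset.prod_mul_distrib]
    refine Finset.prod_congr rfl fun j _ => ?_
    rw [qp_step hq]
    congr 2
    ring
  · have hu : Continuous fun c : ℂ => Function.update α l c :=
      continuous_const.update l continuous_id
    have hd : ‖∏ j, Function.update α l 0 j‖ < ‖q‖ ^ n * ‖∏ j, b j‖ := by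
      rw [Finset.prod_eq_zero (Finset.mem_univ l) (by simp), norm_zero]
      exact mul_pos (pow_pos hn _) (norm_pos_iff.2 hBne)
    refine ContinuousAt.mul ?_ ?_
    · exact ContinuousAt.comp (f := fun c : ℂ => (Function.update α l c, b)) (x := 0)
        (Mx_continuousAt hq0 hq hx hb hreg hd) (by fun_prop)
    · refine (hc.comp ?_).continuousAt
      have : Continuous fun c : ℂ => ∏ j, Function.update α l c j :=
        continuous_finsetProd _ fun j _ => (continuous_apply j).comp hu
      fun_prop
  · fun_prop
  · simp [qp_zero]

/-- The dependence of the determinant on the parameters `α`. -/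
lemma Mx_eq (hdom : ‖∏ j, α j‖ < ‖q‖ ^ n * ‖∏ j, b j‖) :
    (Mx q α b x).det * qp q ((q ^ n)⁻¹ * (∏ j, α j) / ∏ j, b j) =
      (∏ i, ∏ j, qp q (α i / b j)) * (Mx q 0 b x).det := by
  have key : ∀ S : Finset (Fin (n + 1)),
      (Mx q α b x).det * qp q ((q ^ n)⁻¹ * (∏ j, α j) / ∏ j, b j) =
      (∏ i ∈ S, ∏ j, qp q (α i / b j)) * ((Mx q (S.piecewise 0 α) b x).det *
        qp q ((q ^ n)⁻¹ * (∏ j, S.piecewise 0 α j) / ∏ j, b j)) := by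
    intro S
    induction S using Finset.induction_on with
    | empty => simp
    | insert l S hl ih =>
      have hd : ‖∏ j, S.piecewise 0 α j‖ < ‖q‖ ^ n * ‖∏ j, b j‖ := by
        refine lt_of_le_of_lt ?_ hdom
        rw [norm_prod, norm_prod]
        refine Finset.prod_le_prod (fun _ _ => norm_nonneg _) fun j _ => ?_
        by_cases hj : j ∈ S <;> simp [hj]
      rw [ih, Mx_send_zero hq0 hq hx hb hreg l hd, Finset.piecewise_insert,
        Finset.prod_insert hl, Finset.piecewise_eq_of_notMem _ _ _ hl, Pi.zero_apply]
      ring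
  rw [key Finset.univ]
  simp [qp_zero]
end

/-! ### Liouville's theorem on `ℂ^* / q^ℤ` -/

/-- Liouville's theorem on `ℂ^* / q^ℤ`: a `q`-periodic function, holomorphic up to isolated
singularities at which `(y - y₀) E(y) → 0`, is constant. -/
lemma elliptic_liouville {q : ℂ} (hq0 : q ≠ 0) (hq : ‖q‖ < 1) (E : ℂ → ℂ)
    (hd : ∀ y₀, y₀ ≠ 0 → ∀ᶠ y in 𝓝[≠] y₀, DifferentiableAt ℂ E y)
    (ho : ∀ y₀, y₀ ≠ 0 → Tendsto (fun y => (y - y₀) * E y) (𝓝[≠] y₀) (𝓝 0))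
    (hp : ∀ y₀, y₀ ≠ 0 → ∀ᶠ y in 𝓝[≠] y₀, E (q * y) = E y)
    {y z : ℂ} (hy : y ≠ 0) (hz : z ≠ 0) (hyc : ContinuousAt E y) (hzc : ContinuousAt E z) :
    E y = E z := by
  have hn : 0 < ‖q‖ := norm_pos_iff.2 hq0
  -- `F` is the extension of `E` through its removable singularities.
  set F : ℂ → ℂ := fun y => limUnder (𝓝[≠] y) E with hF
  have ho' : ∀ y₀, y₀ ≠ 0 → (fun y => E y - E y₀) =o[𝓝[≠] y₀] fun y => (y - y₀)⁻¹ := by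
    intro y₀ h0
    rw [Asymptotics.isLittleO_iff_tendsto']
    · have h1 := ho y₀ h0
      have h2 : Tendsto (fun y => (y - y₀) * E y₀) (𝓝[≠] y₀) (𝓝 0) := by
        have : Tendsto (fun y => (y - y₀) * E y₀) (𝓝 y₀) (𝓝 ((y₀ - y₀) * E y₀)) :=
          Continuous.tendsto (by fun_prop) y₀
        simpa using this.mono_left nhdsWithin_le_nhds
      have h3 := h1.sub h2
      rw [sub_zero] at h3
      refine h3.congr fun y => ?_
      rw [div_inv_eq_mul]; ring
    · filter_upwards [self_mem_nhdsWithin] with y hy h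
      exact absurd (inv_eq_zero.1 h) (sub_ne_zero.2 hy)
  have T : ∀ y₀, y₀ ≠ 0 → Tendsto E (𝓝[≠] y₀) (𝓝 (F y₀)) := fun y₀ h0 =>
    Complex.tendsto_limUnder_of_differentiable_on_punctured_nhds_of_isLittleO (hd y₀ h0) (ho' y₀ h0)
  have hFE : ∀ y, ContinuousAt E y → F y = E y := fun y h =>
    (h.tendsto.mono_left nhdsWithin_le_nhds).limUnder_eq
  have hFd : ∀ y₀, y₀ ≠ 0 → DifferentiableAt ℂ F y₀ := by
    intro y₀ h0
    have h1 := Complex.differentiableOn_update_limUnder_insert_of_isLittleO (hd y₀ h0)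
      (fun y hy => DifferentiableAt.differentiableWithinAt hy) (ho' y₀ h0)
    have h2 := h1.differentiableAt (insert_mem_nhds_iff.2 (hd y₀ h0))
    refine h2.congr_of_eventuallyEq ?_
    have h3 := eventually_nhdsWithin_iff.1 (hd y₀ h0)
    filter_upwards [h3] with y hy
    by_cases h : y = y₀
    · subst h; simp [hF]
    · rw [Function.update_of_ne h]
      exact hFE y (hy h).continuousAt
  have hFp : ∀ y₀, y₀ ≠ 0 → F (q * y₀) = F y₀ := by
    intro y₀ h0
    have h1 : Tendsto (fun y => q * y) (𝓝[≠] y₀) (𝓝[≠] (q * y₀)) := by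
      refine tendsto_nhdsWithin_iff.2 ⟨?_, ?_⟩
      · exact (Continuous.tendsto (by fun_prop) y₀).mono_left nhdsWithin_le_nhds
      · filter_upwards [self_mem_nhdsWithin] with y hy h
        exact hy (mul_left_cancel₀ hq0 h)
    have h2 := (T (q * y₀) (mul_ne_zero hq0 h0)).comp h1
    exact tendsto_nhds_unique (h2.congr' (hp y₀ h0)) (T y₀ h0)
  have hFz : ∀ (m : ℤ) y₀, y₀ ≠ 0 → F (q ^ m * y₀) = F y₀ := by
    intro m
    induction m using Int.induction_on with
    | zero => simp
    | succ m ih =>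
      intro y₀ h0
      rw [zpow_add_one₀ hq0, mul_assoc, ih _ (mul_ne_zero hq0 h0), hFp _ h0]
    | pred m ih =>
      intro y₀ h0
      have h1 : q⁻¹ * y₀ ≠ 0 := mul_ne_zero (inv_ne_zero hq0) h0
      rw [zpow_sub_one₀ hq0, mul_assoc, ih _ h1, ← hFp _ h1, mul_inv_cancel_left₀ hq0]
  -- Every orbit of multiplication by `q` meets the annulus `|q| ≤ |y| ≤ 1`, so `F` is bounded.
  have hK : IsCompact (Metric.closedBall (0 : ℂ) 1 \ Metric.ball 0 ‖q‖) :=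
    (isCompact_closedBall (0 : ℂ) 1).diff Metric.isOpen_ball
  have hKc : ContinuousOn F (Metric.closedBall (0 : ℂ) 1 \ Metric.ball 0 ‖q‖) := by
    intro y hy
    refine (hFd y ?_).continuousAt.continuousWithinAt
    rintro rfl
    exact hy.2 (by simpa using hn)
  obtain ⟨C, hC⟩ := hK.exists_bound_of_continuousOn hKc
  have hbd : ∀ y, y ≠ 0 → ‖F y‖ ≤ C := by
    intro y hy
    obtain ⟨m, h1, h2⟩ := exists_mem_Ico_zpow (norm_pos_iff.2 hy) (one_lt_inv₀ hn |>.2 hq)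
    rw [← hFz (m + 1) y hy]
    refine hC _ ⟨?_, ?_⟩
    · simp only [Metric.mem_closedBall, dist_zero_right, norm_mul, norm_zpow]
      rw [inv_zpow, lt_inv_comm₀ (norm_pos_iff.2 hy) (zpow_pos hn _)] at h2
      calc _ ≤ ‖y‖⁻¹ * ‖y‖ := by gcongr
        _ = 1 := inv_mul_cancel₀ (norm_ne_zero_iff.2 hy)
    · simp only [Metric.mem_ball, dist_zero_right, norm_mul, norm_zpow, not_lt]
      rw [inv_zpow] at h1
      rw [zpow_add_one₀ hn.ne']
      calc ‖q‖ = ‖q‖ ^ m * ‖q‖ * (‖q‖ ^ m)⁻¹ := by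
            have := (zpow_pos hn m).ne'
            field_simp
        _ ≤ _ := by gcongr
  -- Pulling back by `exp` gives a bounded entire function.
  have hent : Differentiable ℂ fun w => F (Complex.exp w) := fun w =>
    (hFd _ (Complex.exp_ne_zero w)).comp w Complex.differentiableAt_exp
  have hbnd : Bornology.IsBounded (Set.range fun w => F (Complex.exp w)) := by
    refine isBounded_iff_forall_norm_le.2 ⟨C, ?_⟩
    rintro _ ⟨w, rfl⟩
    exact hbd _ (Complex.exp_ne_zero w)
  have := hent.apply_eq_apply_of_bounded hbnd (Complex.log y) (Complex.log z)
  simp only [Complex.exp_log hy, Complex.exp_log hz] at this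
  rw [← hFE y hyc, ← hFE z hzc, this]

/-! ### The one-variable moments at `α = q b` -/

/-- At `α = q b` the factor `(q b_l z)_∞ / (b_l z)_∞` of the weight is `1 / (1 - b_l z)`. -/
lemma tm_split {m : ℕ} {q : ℂ} (hq : ‖q‖ < 1) (b : Fin (m + 1) → ℂ) (l : Fin (m + 1)) (s : ℕ) (z : ℂ)
    (h : qp q (b l * z) ≠ 0) :
    (1 - b l * z) * tm q (fun j => q * b j) b s z =
      tm q (fun j => q * b (l.succAbove j)) (fun j => b (l.succAbove j)) s z := by
  simp only [tm]
  rw [Fin.prod_univ_succAbove _ l]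
  rw [qp_step hq] at h
  have h1 := left_ne_zero_of_mul h
  have h2 := right_ne_zero_of_mul h
  rw [qp_step hq (b l * z), ← mul_assoc q]
  rw [← mul_assoc q] at h2
  generalize qp q (q * b l * z) = A at h2 ⊢
  field_simp

/-- At `α = q b` the weight is a rational function. -/
lemma tm_qb {m : ℕ} {q : ℂ} (hq : ‖q‖ < 1) (b : Fin m → ℂ) (s : ℕ) (z : ℂ)
    (h : ∀ j, qp q (b j * z) ≠ 0) :
    tm q (fun j => q * b j) b s z = z ^ s / ∏ j, (1 - b j * z) := by
  rw [tm, div_eq_mul_inv, ← Finset.prod_inv_distrib]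
  congr 1
  refine Finset.prod_congr rfl fun j _ => ?_
  have h0 := h j
  rw [qp_step hq] at h0
  rw [qp_step hq (b j * z)]
  have h1 := left_ne_zero_of_mul h0
  have h2 := right_ne_zero_of_mul h0
  rw [← mul_assoc q] at h2 ⊢
  field_simp

lemma dom_qb {m : ℕ} {q : ℂ} (hq0 : q ≠ 0) (hq : ‖q‖ < 1) {b : Fin m → ℂ} (hb : ∀ j, b j ≠ 0) {s : ℕ}
    (hs : s < m) : ‖∏ j, q * b j‖ < ‖q‖ ^ s * ‖∏ j, b j‖ := by
  rw [Finset.prod_mul_distrib, norm_mul]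
  have hBne : 0 < ‖∏ j, b j‖ := norm_pos_iff.2 (Finset.prod_ne_zero_iff.2 fun j _ => hb j)
  simp only [Finset.prod_const, Finset.card_univ, Fintype.card_fin, norm_pow]
  gcongr ?_ * _
  exact pow_lt_pow_right_of_lt_one₀ (norm_pos_iff.2 hq0) hq hs

lemma ph_periodic {m : ℕ} {q : ℂ} (hq0 : q ≠ 0) (α b : Fin m → ℂ) (s : ℕ) (x : ℂ) :
    ph q α b s (q * x) = ph q α b s x := by
  rw [ph, ph, ← (Equiv.addRight (1 : ℤ)).tsum_eq (fun ν : ℤ => tm q α b s (x * q ^ ν))]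
  refine tsum_congr fun ν => ?_
  simp only [Equiv.coe_addRight]
  rw [zpow_add_one₀ hq0]
  congr 1; ring

/-- Multiplying the weight by `1 - b_l z` removes the parameter `b_l`; in terms of moments, the
`(s + 1)`-st one is a combination of the `s`-th one and the `s`-th one without `b_l`. -/
lemma ph_remove {m : ℕ} {q : ℂ} (hq0 : q ≠ 0) (hq : ‖q‖ < 1) {b : Fin (m + 1) → ℂ} {x : ℂ} (hx : x ≠ 0)
    (hb : ∀ j, b j ≠ 0) (hreg : ∀ j, th q (x * b j) ≠ 0) (l : Fin (m + 1)) {s : ℕ} (hs : s ≠ 0)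
    (hsm : s < m) :
    ph q (fun j => q * b j) b (s + 1) x = (b l)⁻¹ * ph q (fun j => q * b j) b s x +
      (-(b l)⁻¹) * ph q (fun j => q * b (l.succAbove j)) (fun j => b (l.succAbove j)) s x := by
  have s1 := (tm_summable hq0 hq hx hb hreg (s := s + 1) (by simp)
    (dom_qb hq0 hq hb (by omega))).of_norm
  have s2 := (tm_summable hq0 hq hx hb hreg hs (dom_qb hq0 hq hb (by omega))).of_norm
  have s3 := (tm_summable hq0 hq hx (fun j => hb (l.succAbove j)) (fun j => hreg (l.succAbove j)) hs
    (dom_qb hq0 hq (fun j => hb (l.succAbove j)) hsm)).of_norm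
  simp only [ph]
  rw [← tsum_mul_left, ← tsum_mul_left, ← (s2.mul_left _).tsum_add (s3.mul_left _)]
  refine tsum_congr fun ν => ?_
  rw [← tm_split hq b l s _ (qp_ne_zero_of_th hq0 hq hx (hb l) (hreg l) ν)]
  set z := x * q ^ ν
  simp only [tm, pow_succ]
  have := hb l
  field_simp
  ring

/-- For `w` near `1`, the points `w q ^ (±N)` with `N ≠ 0` stay away from `1`, uniformly in `N`. -/
lemma q_gap {q w : ℂ} (hq : ‖q‖ < 1) (hw : ‖1 - w‖ < (1 - ‖q‖) / 2) {N : ℕ} (hN : N ≠ 0) :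
    (1 - ‖q‖) / 2 ≤ ‖1 - w * q ^ N‖ ∧ (1 - ‖q‖) / 2 ≤ ‖q ^ N - w‖ := by
  have h1 : ‖q ^ N‖ ≤ ‖q‖ := by
    rw [norm_pow]; exact pow_le_of_le_one (norm_nonneg _) hq.le hN
  have h2 : 1 - ‖q‖ ≤ ‖1 - q ^ N‖ := by
    have := norm_sub_norm_le (1 : ℂ) (q ^ N)
    rw [norm_one] at this; linarith
  constructor
  · have h3 := norm_sub_norm_le (1 - q ^ N) (-(q ^ N * (1 - w)))
    have h4 : ‖-(q ^ N * (1 - w))‖ ≤ ‖1 - w‖ := by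
      rw [norm_neg, norm_mul]
      exact mul_le_of_le_one_left (norm_nonneg _) (h1.trans hq.le)
    rw [show 1 - q ^ N - -(q ^ N * (1 - w)) = 1 - w * q ^ N by ring] at h3
    linarith
  · have h3 := norm_sub_norm_le (1 - q ^ N) (1 - w)
    rw [show 1 - q ^ N - (1 - w) = -(q ^ N - w) by ring, norm_neg] at h3
    linarith

/-- The polar part of the first moment at `y = 1 / b_l`. -/
lemma ph_pole {m : ℕ} {q : ℂ} (hq0 : q ≠ 0) (hq : ‖q‖ < 1) {b : Fin (m + 1) → ℂ} (hm : 0 < m)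
    (hb : ∀ j, b j ≠ 0) (l : Fin (m + 1)) (hgen : ∀ j, th q ((b l)⁻¹ * b (l.succAbove j)) ≠ 0) :
    Tendsto (fun y => (1 - b l * y) * ph q (fun j => q * b j) b 1 y) (𝓝[≠] (b l)⁻¹)
      (𝓝 ((b l)⁻¹ / ∏ j, (1 - b (l.succAbove j) * (b l)⁻¹))) := by
  have hn : 0 < ‖q‖ := norm_pos_iff.2 hq0
  set y₀ := (b l)⁻¹ with hy₀
  have hy0 : y₀ ≠ 0 := inv_ne_zero (hb l)
  set b' : Fin m → ℂ := fun j => b (l.succAbove j) with hb'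
  set α' : Fin m → ℂ := fun j => q * b' j with hα'
  have hb0' : ∀ j, b' j ≠ 0 := fun j => hb _
  -- `c ν y` is the factor `(1 - b_l y) / (1 - b_l y q ^ ν)`. As `y → 1 / b_l` it tends to `0` unless
  -- `ν = 0`, so only the term `ν = 0` survives in the limit, by dominated convergence.
  set c : ℤ → ℂ → ℂ := fun ν y => if ν = 0 then 1 else (1 - b l * y) / (1 - b l * y * q ^ ν) with hc
  have hδ : 0 < (1 - ‖q‖) / 2 := by linarith
  have hinc : ContinuousAt (fun y : ℂ => (α', b', y)) y₀ := by fun_prop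
  have near : ∀ᶠ y in 𝓝 y₀, ‖1 - b l * y‖ < (1 - ‖q‖) / 2 := by
    have : ContinuousAt (fun y => ‖1 - b l * y‖) y₀ := by fun_prop
    refine this.eventually_lt_const ?_
    simpa [hy₀, hb l] using hδ
  have bd : ∃ u : ℤ → ℝ, Summable u ∧ ∀ᶠ y in 𝓝 y₀, ∀ ν : ℤ,
      ‖c ν y * tm q α' b' 1 (y * q ^ ν)‖ ≤ u ν := by
    refine int_bound (fun ν y => c ν y * tm q α' b' 1 (y * q ^ ν)) ?_ ?_
    · obtain ⟨u, hu, h⟩ := tm_bound_pos hq0 hq hy0 hb0' hgen (α₀ := α') (s := 1) one_ne_zero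
      refine ⟨u, hu, ?_⟩
      filter_upwards [hinc.tendsto.eventually h, near] with y h1 h2 N
      refine le_trans ?_ (h1 N)
      rw [norm_mul]
      refine mul_le_of_le_one_left (norm_nonneg _) ?_
      by_cases hN : N = 0
      · simp [hc, hN]
      · simp only [hc, Nat.cast_eq_zero, hN, if_false, zpow_natCast, norm_div]
        exact div_le_one_of_le₀ (h2.le.trans (q_gap hq h2 hN).1) (norm_nonneg _)
    · have hd := dom_qb hq0 hq hb0' hm
      obtain ⟨u, hu, h⟩ := tm_bound_neg hq0 hq hy0 hb0' hgen (α₀ := α') (s := 0) hd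
      refine ⟨fun N => (‖y₀‖ + 1) * u N, hu.mul_left _, ?_⟩
      have h3 : ∀ᶠ y in 𝓝 y₀, ‖y‖ < ‖y₀‖ + 1 :=
        (continuous_norm.continuousAt).eventually_lt_const (by simp)
      filter_upwards [hinc.tendsto.eventually h, near, h3] with y h1 h2 h4 N
      rw [← tm_zero_mul, ← mul_assoc, norm_mul]
      refine mul_le_mul ?_ (h1 N) (norm_nonneg _) (by positivity)
      refine le_trans ?_ h4.le
      by_cases hN : N = 0
      · simp [hc, hN]
      · have e : c (-(N : ℤ)) y * (y * q ^ (-(N : ℤ))) ^ 1 = (1 - b l * y) / (q ^ N - b l * y) * y := by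
          have hqN : q ^ N ≠ 0 := pow_ne_zero _ hq0
          simp only [hc, neg_eq_zero, Nat.cast_eq_zero, hN, if_false, zpow_neg, zpow_natCast, pow_one]
          rw [show 1 - b l * y * (q ^ N)⁻¹ = (q ^ N - b l * y) * (q ^ N)⁻¹ by field_simp]
          rw [div_mul_eq_div_div, div_inv_eq_mul]
          field_simp
        rw [e, norm_mul]
        refine mul_le_of_le_one_left (norm_nonneg _) ?_
        rw [norm_div]
        exact div_le_one_of_le₀ (h2.le.trans (q_gap hq h2 hN).2) (norm_nonneg _)
  obtain ⟨u, hu, hbd⟩ := bd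
  have hlim : ∀ ν : ℤ, Tendsto (fun y => c ν y * tm q α' b' 1 (y * q ^ ν)) (𝓝[≠] y₀)
      (𝓝 (if ν = 0 then tm q α' b' 1 y₀ else 0)) := by
    intro ν
    have ht : ContinuousAt (fun y => tm q α' b' 1 (y * q ^ ν)) y₀ :=
      ContinuousAt.comp (f := fun y : ℂ => (α', b', y)) (x := y₀)
        (tm_continuousAt hq0 hq hy0 hb0' hgen 1 ν) hinc
    refine Tendsto.mono_left ?_ nhdsWithin_le_nhds
    by_cases hν : ν = 0
    · subst hν
      simpa [hc] using ht.tendsto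
    · have hcc : ContinuousAt (c ν) y₀ := by
        simp only [hc, hν, if_false]
        refine ContinuousAt.div (by fun_prop) (by fun_prop) ?_
        rw [hy₀, mul_inv_cancel₀ (hb l), one_mul, sub_ne_zero]
        intro h
        have h5 : ‖q‖ ^ ν = ‖q‖ ^ (0 : ℤ) := by rw [← norm_zpow, ← h]; simp
        exact hν (zpow_right_injective₀ hn hq.ne h5)
      have h6 := (hcc.mul ht).tendsto
      have h7 : c ν y₀ = 0 := by simp [hc, hν, hy₀, hb l]
      rw [if_neg hν]
      simp only [Pi.mul_apply] at h6
      rw [h7, zero_mul] at h6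
      exact h6
  have key := tendsto_tsum_of_dominated_convergence hu hlim
    (hbd.filter_mono nhdsWithin_le_nhds)
  rw [tsum_ite_eq, tm_qb hq b' 1 y₀ fun j => by
    simpa using qp_ne_zero_of_th hq0 hq hy0 (hb0' j) (hgen j) 0, pow_one] at key
  refine key.congr' ?_
  have e1 : ∀ᶠ y in 𝓝[≠] y₀, th q (y * b l) ≠ 0 := by
    have h1 : Tendsto (fun y => y * b l) (𝓝[≠] y₀) (𝓝[≠] 1) := by
      refine tendsto_nhdsWithin_iff.2 ⟨?_, ?_⟩
      · have : Tendsto (fun y => y * b l) (𝓝 y₀) (𝓝 (y₀ * b l)) := Continuous.tendsto (by fun_prop) y₀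
        rw [hy₀, inv_mul_cancel₀ (hb l)] at this
        exact this.mono_left nhdsWithin_le_nhds
      · filter_upwards [self_mem_nhdsWithin] with y hy h
        exact hy (eq_inv_of_mul_eq_one_left h)
    exact h1.eventually (th_eventually_ne hq0 hq one_ne_zero)
  have e2 : ∀ᶠ y in 𝓝[≠] y₀, y ≠ 0 := nhdsWithin_le_nhds (isOpen_ne.mem_nhds hy0)
  filter_upwards [e1, e2] with y h1 h2
  rw [ph, ← tsum_mul_left]
  refine tsum_congr fun ν => ?_
  have h3 := qp_ne_zero_of_th hq0 hq h2 (hb l) h1 ν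
  rw [← tm_split hq b l 1 _ h3]
  rw [qp_step hq] at h3
  have h4 := left_ne_zero_of_mul h3
  by_cases hν : ν = 0
  · simp [hc, hν]
  · simp only [hc, hν, if_false]
    rw [← mul_assoc, ← mul_assoc, div_mul_cancel₀]
    rw [mul_assoc]; exact h4

/-! ### Periodicity and residues of the two sides at `α = q b` -/

/-- `(q)_∞` times the value of the determinant at `αⱼ = q bⱼ`. -/
noncomputable def baseRhs {n : ℕ} (q : ℂ) (b x : Fin (n + 1) → ℂ) : ℂ :=
  qp q q ^ n * (∏ i, ∏ j, qp q (q * b i / b j)) *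
    (th q ((∏ i, x i) * ∏ j, b j) / ∏ i, ∏ j, th q (x i * b j)) *
    ∏ i, ∏ j ∈ Finset.Ioi i, x j * th q (x i / x j)

lemma baseRhs_cons {n : ℕ} (q : ℂ) (b : Fin (n + 2) → ℂ) (x' : Fin (n + 1) → ℂ) (y : ℂ) :
    baseRhs q b (Fin.cons y x') =
      (qp q q ^ (n + 1) * (∏ i, ∏ j, qp q (q * b i / b j)) *
        ((∏ i, ∏ j ∈ Finset.Ioi i, x' j * th q (x' i / x' j)) / ∏ i, ∏ j, th q (x' i * b j))) *
      ((th q (y * ((∏ i, x' i) * ∏ j, b j)) * ∏ j, x' j * th q (y / x' j)) /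
        ∏ j, th q (y * b j)) := by
  rw [baseRhs, Fin.prod_univ_succ (fun i => ∏ j ∈ Finset.Ioi i, _), Fin.prod_Ioi_zero]
  simp only [Fin.prod_Ioi_succ, Fin.cons_succ, Fin.cons_zero]
  rw [Fin.prod_univ_succ (fun i => (Fin.cons y x' : Fin (n + 2) → ℂ) i),
    Fin.prod_univ_succ (fun i => ∏ j, th q ((Fin.cons y x' : Fin (n + 2) → ℂ) i * b j))]
  simp only [Fin.cons_succ, Fin.cons_zero, mul_assoc]
  rw [div_eq_mul_inv, div_eq_mul_inv, div_eq_mul_inv, mul_inv]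
  ring

/-- The product side is elliptic in the first point: the multipliers of the `n + 2` theta functions in
the numerator and of the `n + 2` in the denominator cancel. -/
lemma baseRhs_periodic {n : ℕ} {q : ℂ} (hq0 : q ≠ 0) (hq : ‖q‖ < 1) {b : Fin (n + 2) → ℂ}
    {x' : Fin (n + 1) → ℂ} {y : ℂ} (hb : ∀ j, b j ≠ 0) (hx : ∀ i, x' i ≠ 0) (hy : y ≠ 0) :
    baseRhs q b (Fin.cons (q * y) x') = baseRhs q b (Fin.cons y x') := by
  rw [baseRhs_cons, baseRhs_cons]
  congr 1
  have hX : ∏ i, x' i ≠ 0 := Finset.prod_ne_zero_iff.2 fun j _ => hx j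
  have hB : ∏ i, b i ≠ 0 := Finset.prod_ne_zero_iff.2 fun j _ => hb j
  set c := (∏ i, x' i) * ∏ j, b j with hc
  have hc0 : c ≠ 0 := mul_ne_zero hX hB
  have e1 : th q (q * y * c) = th q (y * c) * (-(y * c)⁻¹) := by
    rw [mul_assoc, th_mul_q hq0 hq (mul_ne_zero hy hc0)]
    ring
  have e2 : ∏ j, x' j * th q (q * y / x' j) =
      (∏ j, x' j * th q (y / x' j)) * ((-y⁻¹) ^ (n + 1) * ∏ i, x' i) := by
    rw [show (-y⁻¹) ^ (n + 1) = ∏ _j : Fin (n + 1), (-y⁻¹) by simp, ← Finset.prod_mul_distrib,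
      ← Finset.prod_mul_distrib]
    refine Finset.prod_congr rfl fun j _ => ?_
    rw [mul_div_assoc, th_mul_q hq0 hq (div_ne_zero hy (hx j))]
    rw [div_div_eq_mul_div]
    ring
  have e3 : ∏ j, th q (q * y * b j) = (∏ j, th q (y * b j)) * ((-y⁻¹) ^ (n + 2) * (∏ j, b j)⁻¹) := by
    rw [show (-y⁻¹) ^ (n + 2) = ∏ _j : Fin (n + 2), (-y⁻¹) by simp, ← Finset.prod_inv_distrib,
      ← Finset.prod_mul_distrib, ← Finset.prod_mul_distrib]
    refine Finset.prod_congr rfl fun j _ => ?_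
    rw [mul_assoc, th_mul_q hq0 hq (mul_ne_zero hy (hb j)), div_eq_mul_inv, mul_inv]
    ring
  have e4 : (-(y * c)⁻¹) * ((-y⁻¹) ^ (n + 1) * ∏ i, x' i) = (-y⁻¹) ^ (n + 2) * (∏ j, b j)⁻¹ := by
    rw [hc, mul_inv, mul_inv, pow_succ _ (n + 1)]
    field_simp
  rw [e1, e2, e3, mul_mul_mul_comm, e4]
  refine mul_div_mul_right _ _ ?_
  exact mul_ne_zero (pow_ne_zero _ (neg_ne_zero.2 (inv_ne_zero hy))) (inv_ne_zero hB)

/-- The determinant is a linear combination of the moments at the first point. -/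
lemma Mx_cons_expand {n : ℕ} (q : ℂ) (α b : Fin (n + 2) → ℂ) (x' : Fin (n + 1) → ℂ) :
    ∃ c : Fin (n + 2) → ℂ, ∀ y, (Mx q α b (Fin.cons y x')).det =
      ∑ k : Fin (n + 2), (if k = 0 then 1 else ph q α b (k : ℕ) y) * c k := by
  refine ⟨fun k => (-1) ^ (k : ℕ) *
    ((Mx q α b (Fin.cons 0 x')).submatrix k.succAbove Fin.succ).det, fun y => ?_⟩
  rw [Matrix.det_succ_column_zero]
  refine Finset.sum_congr rfl fun k _ => ?_
  have h1 : Mx q α b (Fin.cons y x') k 0 = if k = 0 then 1 else ph q α b (k : ℕ) y := rfl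
  have h2 : (Mx q α b (Fin.cons y x')).submatrix k.succAbove Fin.succ =
      (Mx q α b (Fin.cons 0 x')).submatrix k.succAbove Fin.succ := rfl
  rw [h1, h2]; ring

/-- The matrix obtained from `Mx` by row operations that remove the parameter `b_l` from all
moments except the first. -/
noncomputable def Nx {n : ℕ} (q : ℂ) (b : Fin (n + 2) → ℂ) (l : Fin (n + 2)) (x : Fin (n + 2) → ℂ) :
    Matrix (Fin (n + 2)) (Fin (n + 2)) ℂ :=
  Matrix.of fun k i => Fin.cases (motive := fun _ => ℂ) 1 (fun ka : Fin (n + 1) =>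
    Fin.cases (motive := fun _ => ℂ) (ph q (fun j => q * b j) b 1 (x i)) (fun kb : Fin n =>
      ph q (fun j => q * b (l.succAbove j)) (fun j => b (l.succAbove j)) (kb + 1) (x i)) ka) k

/-- Row reduction by `ph_remove`: subtracting `1 / b_l` times the preceding row removes `b_l` from
the moments of order at least two. -/
lemma Mx_eq_Nx {n : ℕ} {q : ℂ} (hq0 : q ≠ 0) (hq : ‖q‖ < 1) {b x : Fin (n + 2) → ℂ}
    (hx : ∀ i, x i ≠ 0) (hb : ∀ j, b j ≠ 0) (hreg : ∀ i j, th q (x i * b j) ≠ 0)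
    (l : Fin (n + 2)) :
    (Mx q (fun j => q * b j) b x).det = (-(b l)⁻¹) ^ n * (Nx q b l x).det := by
  set v : Fin (n + 2) → ℂ := Fin.cases 1 (Fin.cases 1 fun _ => -(b l)⁻¹) with hv
  have h1 : ∏ k, v k = (-(b l)⁻¹) ^ n := by
    rw [Fin.prod_univ_succ, Fin.prod_univ_succ]
    change (1 : ℂ) * (1 * ∏ _i : Fin n, -(b l)⁻¹) = _
    simp
  rw [← h1, ← Matrix.det_mul_column]
  refine Matrix.det_eq_of_forall_row_eq_smul_add_pred (Fin.cases 0 fun _ => (b l)⁻¹) ?_ ?_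
  · intro j
    simp [Mx, Nx, hv]
  · intro i j
    refine Fin.cases ?_ (fun i => ?_) i
    · have e1 : Mx q (fun j => q * b j) b x (Fin.succ 0) j = ph q (fun j => q * b j) b 1 (x j) := by
        simp [Mx]
      rw [e1]
      change _ = (1 : ℂ) * ph q (fun j => q * b j) b 1 (x j) + 0 * _
      ring
    · have h := ph_remove hq0 hq (hx j) hb (hreg j) l (s := i + 1) (by simp) (by omega)
      simp [Mx, Nx, hv, h]
      ring

lemma Nx_row_one {n : ℕ} (q : ℂ) (b x : Fin (n + 2) → ℂ) (l i : Fin (n + 2)) :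
    Nx q b l x (Fin.succ 0) i = ph q (fun j => q * b j) b 1 (x i) := rfl

lemma Nx_row_succ {n : ℕ} (q : ℂ) (b x : Fin (n + 2) → ℂ) (l i : Fin (n + 2)) (k : Fin n) :
    Nx q b l x k.succ.succ i = ph q (fun j => q * b (l.succAbove j))
      (fun j => b (l.succAbove j)) (k + 1) (x i) := rfl

/-- Deleting the row of the first moment and the first point leaves the matrix of one size less,
without the parameter `b_l`. -/
lemma Nx_minor {n : ℕ} (q : ℂ) (b x : Fin (n + 2) → ℂ) (l : Fin (n + 2)) :
    (Nx q b l x).submatrix (Fin.succAbove 1) Fin.succ =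
      Mx q (fun j => q * b (l.succAbove j)) (fun j => b (l.succAbove j)) (fun i => x i.succ) := by
  ext k i
  refine Fin.cases ?_ (fun k => ?_) k
  · simp [Nx, Mx]
  · have : (Fin.succAbove 1 k.succ : Fin (n + 2)) = k.succ.succ := by
      rw [← Fin.succ_zero_eq_one, Fin.succ_succAbove_succ]; simp
    simp [Nx, Mx, this]

section
variable {n : ℕ} {q : ℂ} (hq0 : q ≠ 0) (hq : ‖q‖ < 1) {b : Fin (n + 2) → ℂ} {x' : Fin (n + 1) → ℂ}
  (hx : ∀ i, x' i ≠ 0) (hb : ∀ j, b j ≠ 0) (hreg : ∀ i j, th q (x' i * b j) ≠ 0)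
  (hgen : ∀ i j, i ≠ j → th q (b i / b j) ≠ 0)
include hq0 hq hx hb hreg hgen

omit hq0 hq hb hx hreg in
lemma gen_at_pole (l : Fin (n + 2)) (j : Fin (n + 1)) : th q ((b l)⁻¹ * b (l.succAbove j)) ≠ 0 := by
  have := hgen _ _ (Fin.succAbove_ne l j)
  rwa [div_eq_inv_mul] at this

omit hx hreg hgen in
lemma eventually_reg (y₀ : ℂ) (h0 : y₀ ≠ 0) :
    ∀ᶠ y in 𝓝[≠] y₀, y ≠ 0 ∧ ∀ j, th q (y * b j) ≠ 0 := by
  refine Filter.Eventually.and (nhdsWithin_le_nhds (isOpen_ne.mem_nhds h0)) ?_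
  refine eventually_all.2 fun j => ?_
  have h1 : Tendsto (fun y => y * b j) (𝓝[≠] y₀) (𝓝[≠] (y₀ * b j)) := by
    refine tendsto_nhdsWithin_iff.2 ⟨?_, ?_⟩
    · exact (Continuous.tendsto (by fun_prop) y₀).mono_left nhdsWithin_le_nhds
    · filter_upwards [self_mem_nhdsWithin] with y hy h
      exact hy (mul_right_cancel₀ (hb j) h)
  exact h1.eventually (th_eventually_ne hq0 hq (mul_ne_zero h0 (hb j)))

/-- The polar part of the determinant at `y = 1 / b_l`: in the reduced matrix `Nx` only the first
moment is singular there, and its cofactor is the determinant of one size less. -/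
lemma Mx_pole (l : Fin (n + 2)) :
    Tendsto (fun y => (1 - b l * y) * (Mx q (fun j => q * b j) b (Fin.cons y x')).det)
      (𝓝[≠] (b l)⁻¹)
      (𝓝 ((-(b l)⁻¹) ^ n * (-((b l)⁻¹ / ∏ j, (1 - b (l.succAbove j) * (b l)⁻¹)) *
        (Mx q (fun j => q * b (l.succAbove j)) (fun j => b (l.succAbove j)) x').det))) := by
  have hy0 : (b l)⁻¹ ≠ 0 := inv_ne_zero (hb l)
  have hg := gen_at_pole hgen l
  set y₀ := (b l)⁻¹ with hy₀
  set D := y₀ / ∏ j, (1 - b (l.succAbove j) * y₀) with hD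
  have hlin : Tendsto (fun y => 1 - b l * y) (𝓝[≠] y₀) (𝓝 0) := by
    have : Tendsto (fun y => 1 - b l * y) (𝓝 y₀) (𝓝 (1 - b l * y₀)) :=
      Continuous.tendsto (by fun_prop) y₀
    rw [hy₀, mul_inv_cancel₀ (hb l), sub_self] at this
    exact this.mono_left nhdsWithin_le_nhds
  have hcol : ∀ k : Fin (n + 2), Tendsto (fun y => (1 - b l * y) * Nx q b l (Fin.cons y x') k 0)
      (𝓝[≠] y₀) (𝓝 (if k = 1 then D else 0)) := by
    intro k
    refine Fin.cases ?_ (fun k => Fin.cases ?_ (fun k => ?_) k) k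
    · simpa [Nx] using hlin
    · have := ph_pole hq0 hq (Nat.succ_pos n) hb l hg
      rw [if_pos (by simp)]
      simp only [Nx_row_one, Fin.cons_zero]
      exact this
    · have hc : ContinuousAt (fun y => ph q (fun j => q * b (l.succAbove j))
          (fun j => b (l.succAbove j)) (k + 1) y) y₀ :=
        (ph_differentiableAt hq0 hq hy0 (fun j => hb _) hg (Nat.succ_ne_zero _)
          (dom_qb hq0 hq (fun j => hb _) (by omega))).continuousAt
      have h1 := hlin.mul (hc.tendsto.mono_left nhdsWithin_le_nhds)
      have h2 : (k.succ.succ : Fin (n + 2)) ≠ 1 := by simp [Fin.ext_iff]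
      rw [if_neg h2]
      rw [zero_mul] at h1
      simp only [Nx_row_succ, Fin.cons_zero]
      exact h1
  have hsum : Tendsto (fun y => ∑ k : Fin (n + 2), (-1 : ℂ) ^ (k : ℕ) *
      ((1 - b l * y) * Nx q b l (Fin.cons y x') k 0) *
      ((Nx q b l (Fin.cons 0 x')).submatrix k.succAbove Fin.succ).det) (𝓝[≠] y₀)
      (𝓝 (∑ k : Fin (n + 2), (-1 : ℂ) ^ (k : ℕ) * (if k = 1 then D else 0) *
      ((Nx q b l (Fin.cons 0 x')).submatrix k.succAbove Fin.succ).det)) :=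
    tendsto_finsetSum _ fun k _ => ((hcol k).const_mul _).mul_const _
  rw [Finset.sum_eq_single 1 (fun k _ hk => by simp [hk]) (by simp)] at hsum
  rw [Nx_minor] at hsum
  simp only [if_true, Fin.val_one, pow_one, Fin.cons_succ] at hsum
  have h3 := hsum.const_mul ((-y₀) ^ n)
  rw [neg_one_mul] at h3
  refine h3.congr' ?_
  filter_upwards [eventually_reg hq0 hq hb y₀ hy0] with y hy
  have hxx : ∀ i, (Fin.cons y x' : Fin (n + 2) → ℂ) i ≠ 0 := Fin.cases hy.1 hx
  have hrr : ∀ i j, th q ((Fin.cons y x' : Fin (n + 2) → ℂ) i * b j) ≠ 0 := Fin.cases hy.2 hreg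
  rw [Mx_eq_Nx hq0 hq hxx hb hrr l, Matrix.det_succ_column_zero, mul_left_comm]
  congr 1
  rw [Finset.mul_sum]
  refine Finset.sum_congr rfl fun k _ => ?_
  have h2 : (Nx q b l (Fin.cons y x')).submatrix k.succAbove Fin.succ =
      (Nx q b l (Fin.cons 0 x')).submatrix k.succAbove Fin.succ := by
    ext i j
    simp only [Matrix.submatrix_apply, Nx, Matrix.of_apply, Fin.cons_succ]
  rw [h2]; ring
end

lemma qp_self_ne_zero {q : ℂ} (hq : ‖q‖ < 1) : qp q q ≠ 0 := by
  refine qp_ne_zero hq fun k h => ?_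
  rw [← pow_succ] at h
  have := congrArg norm h
  rw [norm_pow, norm_one] at this
  exact absurd this (pow_lt_one₀ (norm_nonneg _) hq (Nat.succ_ne_zero _)).ne

section
variable {n : ℕ} {q : ℂ} (hq0 : q ≠ 0) (hq : ‖q‖ < 1) {b : Fin (n + 2) → ℂ} {x' : Fin (n + 1) → ℂ}
  (hx : ∀ i, x' i ≠ 0) (hb : ∀ j, b j ≠ 0) (hreg : ∀ i j, th q (x' i * b j) ≠ 0)
  (hgen : ∀ i j, i ≠ j → th q (b i / b j) ≠ 0)
include hq0 hq hx hb hreg hgen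

/-- The residue constant of the product side at `y = b_l⁻¹` reduces to the product side with one
variable and one parameter fewer. -/
lemma baseRhs_residue (l : Fin (n + 2)) :
    (qp q q ^ (n + 1) * (∏ i, ∏ j, qp q (q * b i / b j)) *
        ((∏ i, ∏ j ∈ Finset.Ioi i, x' j * th q (x' i / x' j)) / ∏ i, ∏ j, th q (x' i * b j))) *
      ((th q ((b l)⁻¹ * ((∏ i, x' i) * ∏ j, b j)) * ∏ j, x' j * th q ((b l)⁻¹ / x' j)) /
        (qp q q * qp q q * ∏ j, th q ((b l)⁻¹ * b (l.succAbove j)))) =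
    (-(b l)⁻¹) ^ n * (-((b l)⁻¹ / ∏ j, (1 - b (l.succAbove j) * (b l)⁻¹)) *
        baseRhs q (fun j => b (l.succAbove j)) x') := by
  have hbl := hb l
  have hQ := qp_self_ne_zero hq
  have hg := gen_at_pole hgen l
  have eC : ∏ i, ∏ j, qp q (q * b i / b j) =
      qp q q * (∏ j, qp q (q * b l / b (l.succAbove j))) *
        ((∏ i, qp q (q * b (l.succAbove i) / b l)) *
          ∏ i, ∏ j, qp q (q * b (l.succAbove i) / b (l.succAbove j))) := by
    rw [Fin.prod_univ_succAbove _ l, Fin.prod_univ_succAbove _ l, ← Finset.prod_mul_distrib]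
    congr 1
    · rw [mul_div_assoc, div_self hbl, mul_one]
    · exact Finset.prod_congr rfl fun i _ => Fin.prod_univ_succAbove _ l
  have eT : ∏ i, ∏ j, th q (x' i * b j) =
      (∏ i, th q (x' i * b l)) * ∏ i, ∏ j, th q (x' i * b (l.succAbove j)) := by
    rw [← Finset.prod_mul_distrib]
    exact Finset.prod_congr rfl fun i _ => Fin.prod_univ_succAbove _ l
  have eD : ∏ j, th q ((b l)⁻¹ * b (l.succAbove j)) =
      (∏ j, (1 - b (l.succAbove j) * (b l)⁻¹)) * (∏ i, qp q (q * b (l.succAbove i) / b l)) *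
        (∏ j, qp q (q * b l / b (l.succAbove j))) := by
    rw [← Finset.prod_mul_distrib, ← Finset.prod_mul_distrib]
    refine Finset.prod_congr rfl fun j _ => ?_
    rw [th_eq hq, show q * ((b l)⁻¹ * b (l.succAbove j)) = q * b (l.succAbove j) / b l by
      rw [div_eq_mul_inv]; ring, mul_comm (b l)⁻¹,
      show q / (b (l.succAbove j) * (b l)⁻¹) = q * b l / b (l.succAbove j) by
        rw [← div_eq_mul_inv, div_div_eq_mul_div]]
  have eX : ∏ j, x' j * th q ((b l)⁻¹ / x' j) = (-(b l)⁻¹) ^ (n + 1) * ∏ i, th q (x' i * b l) := by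
    rw [show (-(b l)⁻¹) ^ (n + 1) = ∏ _j : Fin (n + 1), (-(b l)⁻¹) by simp,
      ← Finset.prod_mul_distrib]
    refine Finset.prod_congr rfl fun j _ => ?_
    rw [show (b l)⁻¹ / x' j = (x' j * b l)⁻¹ by rw [mul_inv, div_eq_mul_inv, mul_comm],
      th_inv hq0 hq (mul_ne_zero (hx j) hbl), neg_div, mul_neg, neg_mul,
      mul_comm (x' j) (b l), div_mul_eq_div_div, mul_div_cancel₀ _ (hx j), div_eq_inv_mul]
  have eB : (b l)⁻¹ * ((∏ i, x' i) * ∏ j, b j) = (∏ i, x' i) * ∏ j, b (l.succAbove j) := by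
    rw [Fin.prod_univ_succAbove b l, mul_left_comm, ← mul_assoc (b l)⁻¹, inv_mul_cancel₀ hbl,
      one_mul]
  have hDne : ∏ j, th q ((b l)⁻¹ * b (l.succAbove j)) ≠ 0 := Finset.prod_ne_zero_iff.2 fun j _ => hg j
  have hTne : ∏ i, ∏ j, th q (x' i * b j) ≠ 0 :=
    Finset.prod_ne_zero_iff.2 fun i _ => Finset.prod_ne_zero_iff.2 fun j _ => hreg i j
  rw [eD] at hDne
  rw [eT] at hTne
  rw [eC, eT, eD, eX, eB, baseRhs]
  generalize (∏ j, qp q (q * b l / b (l.succAbove j))) = P1 at *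
  generalize (∏ i, qp q (q * b (l.succAbove i) / b l)) = P2 at *
  generalize (∏ i, ∏ j, qp q (q * b (l.succAbove i) / b (l.succAbove j))) = C' at *
  generalize (∏ i, th q (x' i * b l)) = T1 at *
  generalize (∏ i, ∏ j, th q (x' i * b (l.succAbove j))) = T' at *
  generalize (∏ j, (1 - b (l.succAbove j) * (b l)⁻¹)) = D at *
  generalize th q _ = θ
  generalize (∏ i, ∏ j ∈ Finset.Ioi i, x' j * th q (x' i / x' j)) = V
  generalize qp q q = Q at *
  have hP1 : P1 ≠ 0 := right_ne_zero_of_mul hDne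
  have hP2 : P2 ≠ 0 := right_ne_zero_of_mul (left_ne_zero_of_mul hDne)
  have hD : D ≠ 0 := left_ne_zero_of_mul (left_ne_zero_of_mul hDne)
  have hT1 : T1 ≠ 0 := left_ne_zero_of_mul hTne
  have hT' : T' ≠ 0 := right_ne_zero_of_mul hTne
  generalize (b l)⁻¹ = z
  rw [pow_succ (-z) n, pow_succ Q n]
  generalize (-z) ^ n = w
  field_simp

/-- Behaviour of the product side at the pole `y = b_l⁻¹`. -/
lemma baseRhs_pole (l : Fin (n + 2)) :
    Tendsto (fun y => (1 - b l * y) * baseRhs q b (Fin.cons y x')) (𝓝[≠] (b l)⁻¹)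
      (𝓝 ((-(b l)⁻¹) ^ n * (-((b l)⁻¹ / ∏ j, (1 - b (l.succAbove j) * (b l)⁻¹)) *
        baseRhs q (fun j => b (l.succAbove j)) x'))) := by
  rw [← baseRhs_residue hq0 hq hx hb hreg hgen l]
  have hy0 : (b l)⁻¹ ≠ 0 := inv_ne_zero (hb l)
  have hg := gen_at_pole hgen l
  have hc0 : (∏ i, x' i) * ∏ j, b j ≠ 0 := mul_ne_zero
    (Finset.prod_ne_zero_iff.2 fun j _ => hx j) (Finset.prod_ne_zero_iff.2 fun j _ => hb j)
  have hQ := qp_self_ne_zero hq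
  have hnum : ContinuousAt (fun y => th q (y * ((∏ i, x' i) * ∏ j, b j)) *
      ∏ j, x' j * th q (y / x' j)) (b l)⁻¹ := by
    refine ContinuousAt.mul ?_ ?_
    · exact ContinuousAt.comp (f := fun y => y * ((∏ i, x' i) * ∏ j, b j)) (g := th q)
        (th_differentiableAt hq (mul_ne_zero hy0 hc0)).continuousAt (by fun_prop)
    · refine tendsto_finsetProd _ fun j _ => ?_
      refine Tendsto.const_mul _ ?_
      exact ContinuousAt.comp (f := fun y => y / x' j) (g := th q)
        (th_differentiableAt hq (div_ne_zero hy0 (hx j))).continuousAt (by fun_prop)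
  have hden : Tendsto (fun y => qp q (q * (y * b l)) * qp q (q / (y * b l)) *
      ∏ j, th q (y * b (l.succAbove j))) (𝓝 (b l)⁻¹)
      (𝓝 (qp q q * qp q q * ∏ j, th q ((b l)⁻¹ * b (l.succAbove j)))) := by
    refine Tendsto.mul (Tendsto.mul ?_ ?_) ?_
    · have : Tendsto (fun y => qp q (q * (y * b l))) (𝓝 (b l)⁻¹)
          (𝓝 (qp q (q * ((b l)⁻¹ * b l)))) :=
        Continuous.tendsto ((qp_continuous hq).comp (by fun_prop)) _
      rwa [inv_mul_cancel₀ (hb l), mul_one] at this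
    · have : Tendsto (fun y => qp q (q / (y * b l))) (𝓝 (b l)⁻¹)
          (𝓝 (qp q (q / ((b l)⁻¹ * b l)))) :=
        (qp_continuous hq).continuousAt.comp (f := fun y => q / (y * b l))
          (ContinuousAt.div continuousAt_const (by fun_prop) (mul_ne_zero hy0 (hb l)))
      rwa [inv_mul_cancel₀ (hb l), div_one] at this
    · refine tendsto_finsetProd _ fun j _ => ?_
      exact ContinuousAt.comp (f := fun y => y * b (l.succAbove j)) (g := th q)
        (th_differentiableAt hq (mul_ne_zero hy0 (hb _))).continuousAt (by fun_prop)
  have hlim := (hnum.tendsto.div hden (mul_ne_zero (mul_ne_zero hQ hQ)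
    (Finset.prod_ne_zero_iff.2 fun j _ => hg j))).const_mul
    (qp q q ^ (n + 1) * (∏ i, ∏ j, qp q (q * b i / b j)) *
        ((∏ i, ∏ j ∈ Finset.Ioi i, x' j * th q (x' i / x' j)) / ∏ i, ∏ j, th q (x' i * b j)))
  refine (hlim.mono_left nhdsWithin_le_nhds).congr' ?_
  filter_upwards [self_mem_nhdsWithin] with y hy
  have h1 : 1 - b l * y ≠ 0 := by
    intro h
    exact hy (eq_inv_of_mul_eq_one_right (sub_eq_zero.1 h).symm)
  rw [baseRhs_cons, Fin.prod_univ_succAbove (fun j => th q (y * b j)) l, th_eq hq (y * b l),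
    mul_left_comm]
  congr 1
  rw [mul_comm y (b l)]
  simp only [Pi.div_apply]
  rw [mul_assoc (1 - b l * y), mul_assoc (1 - b l * y), ← mul_div_assoc,
    mul_div_mul_left _ _ h1, mul_comm (b l) y]
end

/-! ### Evaluation at `α = q b` -/

/-- The difference of the two sides of the base evaluation, as a function of the first point. -/
noncomputable def diffE {n : ℕ} (q : ℂ) (b : Fin (n + 2) → ℂ) (x' : Fin (n + 1) → ℂ) (y : ℂ) : ℂ :=
  qp q q * (Mx q (fun j => q * b j) b (Fin.cons y x')).det - baseRhs q b (Fin.cons y x')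

section
variable {n : ℕ} {q : ℂ} (hq0 : q ≠ 0) (hq : ‖q‖ < 1) {b : Fin (n + 2) → ℂ} {x' : Fin (n + 1) → ℂ}
  (hx : ∀ i, x' i ≠ 0) (hb : ∀ j, b j ≠ 0) (hreg : ∀ i j, th q (x' i * b j) ≠ 0)
  (hgen : ∀ i j, i ≠ j → th q (b i / b j) ≠ 0)
include hq0 hq hx hb

lemma diffE_periodic {y : ℂ} (hy : y ≠ 0) : diffE q b x' (q * y) = diffE q b x' y := by
  obtain ⟨c, hc⟩ := Mx_cons_expand q (fun j => q * b j) b x'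
  rw [diffE, diffE, hc, hc, baseRhs_periodic hq0 hq hb hx hy]
  simp only [ph_periodic hq0]

lemma diffE_periodic_zpow {y : ℂ} (hy : y ≠ 0) (m : ℤ) :
    diffE q b x' (q ^ m * y) = diffE q b x' y := by
  induction m using Int.induction_on with
  | zero => simp
  | succ k ih =>
    rw [zpow_add_one₀ hq0, mul_comm _ q, mul_assoc,
      diffE_periodic hq0 hq hx hb (mul_ne_zero (zpow_ne_zero _ hq0) hy), ih]
  | pred k ih =>
    rw [← ih, ← diffE_periodic hq0 hq hx hb (mul_ne_zero (zpow_ne_zero _ hq0) hy), ← mul_assoc,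
      ← zpow_one_add₀ hq0]
    congr 3; ring

lemma diffE_differentiableAt {y : ℂ} (hy : y ≠ 0) (hr : ∀ j, th q (y * b j) ≠ 0) :
    DifferentiableAt ℂ (diffE q b x') y := by
  obtain ⟨c, hc⟩ := Mx_cons_expand q (fun j => q * b j) b x'
  have hc0 : (∏ i, x' i) * ∏ j, b j ≠ 0 := mul_ne_zero
    (Finset.prod_ne_zero_iff.2 fun j _ => hx j) (Finset.prod_ne_zero_iff.2 fun j _ => hb j)
  have hfun : diffE q b x' = fun y => qp q q *
      (∑ k : Fin (n + 2), (if k = 0 then 1 else ph q (fun j => q * b j) b (k : ℕ) y) * c k) -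
      (qp q q ^ (n + 1) * (∏ i, ∏ j, qp q (q * b i / b j)) *
        ((∏ i, ∏ j ∈ Finset.Ioi i, x' j * th q (x' i / x' j)) / ∏ i, ∏ j, th q (x' i * b j))) *
      ((th q (y * ((∏ i, x' i) * ∏ j, b j)) * ∏ j, x' j * th q (y / x' j)) /
        ∏ j, th q (y * b j)) := by
    funext z
    rw [diffE, hc, baseRhs_cons]
  have hth : ∀ d : ℂ, d ≠ 0 → DifferentiableAt ℂ (fun y => th q (y * d)) y := fun d hd =>
    DifferentiableAt.comp (f := fun y => y * d) (g := th q) y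
      (th_differentiableAt hq (mul_ne_zero hy hd)) (by fun_prop)
  rw [hfun]
  refine DifferentiableAt.sub (DifferentiableAt.const_mul ?_ _) (DifferentiableAt.const_mul ?_ _)
  · refine DifferentiableAt.fun_sum fun k _ => DifferentiableAt.mul_const ?_ _
    by_cases hk : k = 0
    · simp only [if_pos hk]; fun_prop
    · simp only [if_neg hk]
      exact ph_differentiableAt hq0 hq hy hb hr (fun h => hk (Fin.ext h))
        (dom_qb hq0 hq hb k.2)
  · refine DifferentiableAt.div (DifferentiableAt.mul (hth _ hc0) ?_) ?_
      (Finset.prod_ne_zero_iff.2 fun j _ => hr j)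
    · refine DifferentiableAt.fun_finsetProd fun j _ => DifferentiableAt.const_mul ?_ _
      simp only [div_eq_mul_inv]
      exact hth _ (inv_ne_zero (hx j))
    · exact DifferentiableAt.fun_finsetProd fun j _ => hth _ (hb j)

include hreg hgen

/-- Assuming the evaluation of one size less, the polar parts of the two sides cancel at every point
of `b_l⁻¹ q^ℤ`; by periodicity it is enough to look at `b_l⁻¹`. -/
lemma diffE_no_pole
    (ih : ∀ l : Fin (n + 2), qp q q * (Mx q (fun j => q * b (l.succAbove j))
      (fun j => b (l.succAbove j)) x').det = baseRhs q (fun j => b (l.succAbove j)) x')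
    {y₀ : ℂ} (hy : y₀ ≠ 0) : Tendsto (fun y => (y - y₀) * diffE q b x' y) (𝓝[≠] y₀) (𝓝 0) := by
  by_cases hr : ∀ j, th q (y₀ * b j) ≠ 0
  · have h1 : Tendsto (fun y => y - y₀) (𝓝[≠] y₀) (𝓝 (y₀ - y₀)) :=
      (Continuous.tendsto (by fun_prop) y₀).mono_left nhdsWithin_le_nhds
    have h2 := h1.mul ((diffE_differentiableAt hq0 hq hx hb hy hr).continuousAt.tendsto.mono_left
      (nhdsWithin_le_nhds (s := {y₀}ᶜ)))
    rwa [sub_self, zero_mul] at h2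
  · push Not at hr
    obtain ⟨l, hl⟩ := hr
    obtain ⟨m, hm⟩ := exists_zpow_of_th hq0 hq (mul_ne_zero hy (hb l)) hl
    have hy₀ : y₀ = q ^ m * (b l)⁻¹ := by rw [← hm, mul_assoc, mul_inv_cancel₀ (hb l), mul_one]
    have hqm : q ^ m ≠ 0 := zpow_ne_zero _ hq0
    have h1 : Tendsto (fun y => (1 - b l * y) * diffE q b x' y) (𝓝[≠] (b l)⁻¹) (𝓝 0) := by
      have hA := ((Mx_pole hq0 hq hx hb hreg hgen l).const_mul (qp q q)).sub
        (baseRhs_pole hq0 hq hx hb hreg hgen l)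
      rw [← ih l] at hA
      refine (hA.congr fun y => ?_).trans (le_of_eq ?_)
      · rw [diffE]; ring
      · congr 1; ring
    have h2 : Tendsto (fun y => (q ^ m)⁻¹ * y) (𝓝[≠] y₀) (𝓝[≠] (b l)⁻¹) := by
      refine tendsto_nhdsWithin_iff.2 ⟨?_, ?_⟩
      · have : Tendsto (fun y => (q ^ m)⁻¹ * y) (𝓝 y₀) (𝓝 ((q ^ m)⁻¹ * y₀)) :=
          Continuous.tendsto (by fun_prop) y₀
        rw [hy₀, inv_mul_cancel_left₀ hqm, ← hy₀] at this
        exact this.mono_left nhdsWithin_le_nhds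
      · filter_upwards [self_mem_nhdsWithin] with y hy h
        refine hy ?_
        rw [Set.mem_singleton_iff] at h ⊢
        rw [hy₀, ← h, mul_inv_cancel_left₀ hqm]
    have h3 := (h1.comp h2).const_mul (-y₀)
    rw [mul_zero] at h3
    refine h3.congr' ?_
    filter_upwards [nhdsWithin_le_nhds (isOpen_ne.mem_nhds hy)] with y hy'
    have h4 := diffE_periodic_zpow hq0 hq hx hb (y := (q ^ m)⁻¹ * y)
      (mul_ne_zero (inv_ne_zero hqm) hy') m
    rw [mul_inv_cancel_left₀ hqm] at h4
    simp only [Function.comp_apply]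
    rw [← h4, ← mul_assoc]
    congr 1
    have hbl := hb l
    rw [hy₀]
    field_simp
    ring

end

/-- Evaluation of the determinant at `αⱼ = q bⱼ` for parameters `b` in general position. -/
lemma base_eval {q : ℂ} (hq0 : q ≠ 0) (hq : ‖q‖ < 1) : ∀ (n : ℕ) (b x : Fin (n + 1) → ℂ),
    (∀ i, x i ≠ 0) → (∀ j, b j ≠ 0) → (∀ i j, th q (x i * b j) ≠ 0) →
    (∀ i j, i ≠ j → th q (b i / b j) ≠ 0) →
    qp q q * (Mx q (fun j => q * b j) b x).det = baseRhs q b x := by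
  intro n
  induction n with
  | zero =>
    intro b x hx hb hreg _
    have h := hreg 0 0
    simp [Mx, baseRhs, mul_div_assoc, div_self (hb 0), div_self h]
  | succ n ihn =>
    intro b x hx hb hreg hgen
    set x' : Fin (n + 1) → ℂ := fun i => x i.succ with hx'
    have hxc : x = Fin.cons (x 0) x' := (Fin.cons_self_tail x).symm
    have hX : ∀ i, x' i ≠ 0 := fun i => hx _
    have hR : ∀ i j, th q (x' i * b j) ≠ 0 := fun i j => hreg _ _
    have ih : ∀ l : Fin (n + 2), qp q q * (Mx q (fun j => q * b (l.succAbove j))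
        (fun j => b (l.succAbove j)) x').det = baseRhs q (fun j => b (l.succAbove j)) x' :=
      fun l => ihn _ _ hX (fun j => hb _) (fun i j => hR _ _)
        fun i j hij => hgen _ _ fun h => hij (Fin.succAbove_right_injective h)
    -- When the first two points agree, two columns coincide, and the product contains `θ(1) = 0`.
    have hzero : diffE q b x' (x' 0) = 0 := by
      have h1 : (Mx q (fun j => q * b j) b (Fin.cons (x' 0) x')).det = 0 := by
        refine Matrix.det_zero_of_column_eq (i := 0) (j := Fin.succ 0) (Fin.succ_ne_zero 0).symm ?_
        intro k
        simp only [Mx, Matrix.of_apply, Fin.cons_zero, Fin.cons_succ]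
      have h2 : ∏ j, x' j * th q (x' 0 / x' j) = 0 := by
        refine Finset.prod_eq_zero (Finset.mem_univ 0) ?_
        rw [div_self (hX 0), th_one hq, mul_zero]
      rw [diffE, h1, baseRhs_cons, h2]
      simp
    have hE := elliptic_liouville hq0 hq (diffE q b x')
      (fun y₀ h0 => (eventually_reg hq0 hq hb y₀ h0).mono fun y hy =>
        diffE_differentiableAt hq0 hq hX hb hy.1 hy.2)
      (fun y₀ h0 => diffE_no_pole hq0 hq hX hb hR hgen ih h0)
      (fun y₀ h0 => (eventually_reg hq0 hq hb y₀ h0).mono fun y hy =>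
        diffE_periodic hq0 hq hX hb hy.1)
      (hx 0) (hX 0) (diffE_differentiableAt hq0 hq hX hb (hx 0) (hreg 0)).continuousAt
      (diffE_differentiableAt hq0 hq hX hb (hX 0) (hR 0)).continuousAt
    rw [hzero, diffE, ← hxc, sub_eq_zero] at hE
    exact hE

/-! ### Evaluation at `α = 0` -/

/-- The value of the determinant at `α = 0`. -/
noncomputable def zeroRhs {n : ℕ} (q : ℂ) (b x : Fin (n + 1) → ℂ) : ℂ :=
  qp q q ^ n * (th q ((∏ i, x i) * ∏ j, b j) / ∏ i, ∏ j, th q (x i * b j)) *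
    ∏ i, ∏ j ∈ Finset.Ioi i, x j * th q (x i / x j)

section
variable {n : ℕ} {q : ℂ} (hq0 : q ≠ 0) (hq : ‖q‖ < 1) {b x : Fin (n + 1) → ℂ}
  (hx : ∀ i, x i ≠ 0) (hb : ∀ j, b j ≠ 0) (hreg : ∀ i j, th q (x i * b j) ≠ 0)
include hq0 hq hx hb hreg

/-- Solving `Mx_eq` at `α = q b` for the determinant at `α = 0`; genericity of `b` makes the factors
`(q bᵢ / bⱼ)_∞` nonzero. -/
lemma zero_eval_generic (hgen : ∀ i j, i ≠ j → th q (b i / b j) ≠ 0) :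
    (Mx q 0 b x).det = zeroRhs q b x := by
  have h1 := Mx_eq hq0 hq hx hb hreg (dom_qb hq0 hq hb (Nat.lt_succ_self n))
  have h2 := base_eval hq0 hq n b x hx hb hreg hgen
  have hB : ∏ j, b j ≠ 0 := Finset.prod_ne_zero_iff.2 fun j _ => hb j
  have h3 : (q ^ n)⁻¹ * (∏ j, q * b j) / ∏ j, b j = q := by
    rw [Finset.prod_mul_distrib, Finset.prod_const, Finset.card_univ, Fintype.card_fin, pow_succ]
    field_simp
  have hC : ∏ i, ∏ j, qp q (q * b i / b j) ≠ 0 := by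
    refine Finset.prod_ne_zero_iff.2 fun i _ => Finset.prod_ne_zero_iff.2 fun j _ => ?_
    by_cases hij : i = j
    · rw [hij, mul_div_assoc, div_self (hb j), mul_one]
      exact qp_self_ne_zero hq
    · have := hgen i j hij
      rw [th_eq hq, ← mul_div_assoc] at this
      exact right_ne_zero_of_mul (left_ne_zero_of_mul this)
  rw [h3, mul_comm, h2, baseRhs] at h1
  refine mul_left_cancel₀ hC ?_
  rw [← h1, zeroRhs]
  ring

/-- Evaluation of the determinant at `α = 0`; parameters `b` in special position are reached as
limits of the generic ones `bⱼ (1 + j t)`, `t → 0`. -/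
lemma zero_eval : (Mx q 0 b x).det = zeroRhs q b x := by
  set B : ℂ → Fin (n + 1) → ℂ := fun t j => b j * (1 + (j : ℕ) * t) with hBdef
  have hBc : Continuous B := by fun_prop
  have hB0 : B 0 = b := by funext j; simp [hBdef]
  have hB : Tendsto B (𝓝[≠] 0) (𝓝 b) := by
    have := hBc.tendsto 0
    rw [hB0] at this
    exact this.mono_left nhdsWithin_le_nhds
  have hXne : ∏ i, x i ≠ 0 := Finset.prod_ne_zero_iff.2 fun j _ => hx j
  have hBne : ∏ j, b j ≠ 0 := Finset.prod_ne_zero_iff.2 fun j _ => hb j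
  have hthB : ∀ i j, ContinuousAt (fun b' : Fin (n + 1) → ℂ => th q (x i * b' j)) b := fun i j =>
    ContinuousAt.comp (f := fun b' : Fin (n + 1) → ℂ => x i * b' j) (g := th q)
      (th_differentiableAt hq (mul_ne_zero (hx i) (hb j))).continuousAt
      (continuous_const.mul (continuous_apply j)).continuousAt
  have hL : Tendsto (fun t => (Mx q 0 (B t) x).det) (𝓝[≠] 0) (𝓝 (Mx q 0 b x).det) := by
    have hdom : ‖∏ j, (0 : Fin (n + 1) → ℂ) j‖ < ‖q‖ ^ n * ‖∏ j, b j‖ := by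
      rw [show ∏ j, (0 : Fin (n + 1) → ℂ) j = 0 by simp, norm_zero]
      exact mul_pos (pow_pos (norm_pos_iff.2 hq0) _) (norm_pos_iff.2 hBne)
    have h0 : Tendsto (fun t => ((0 : Fin (n + 1) → ℂ), B t)) (𝓝[≠] 0) (𝓝 (0, b)) :=
      tendsto_const_nhds.prodMk_nhds hB
    have h1 := (Mx_continuousAt hq0 hq hx hb hreg hdom).tendsto.comp h0
    simp only [Function.comp_def] at h1
    exact h1
  have hR : Tendsto (fun t => zeroRhs q (B t) x) (𝓝[≠] 0) (𝓝 (zeroRhs q b x)) := by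
    have hc : ContinuousAt (fun b' => zeroRhs q b' x) b := by
      unfold zeroRhs
      refine ContinuousAt.mul (ContinuousAt.mul continuousAt_const (ContinuousAt.div ?_ ?_ ?_))
        continuousAt_const
      · exact ContinuousAt.comp (f := fun b' : Fin (n + 1) → ℂ => (∏ i, x i) * ∏ j, b' j)
          (g := th q) (th_differentiableAt hq (mul_ne_zero hXne hBne)).continuousAt (by fun_prop)
      · exact tendsto_finsetProd _ fun i _ => tendsto_finsetProd _ fun j _ => hthB i j
      · exact Finset.prod_ne_zero_iff.2 fun i _ => Finset.prod_ne_zero_iff.2 fun j _ => hreg i j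
    exact hc.tendsto.comp hB
  refine tendsto_nhds_unique_of_eventuallyEq hL hR ?_
  have e1 : ∀ᶠ t in 𝓝[≠] (0 : ℂ), ∀ j, B t j ≠ 0 := eventually_all.2 fun j =>
    (((continuous_apply j).tendsto b).comp hB).eventually_ne (hb j)
  have e2 : ∀ᶠ t in 𝓝[≠] (0 : ℂ), ∀ i j, th q (x i * B t j) ≠ 0 :=
    eventually_all.2 fun i => eventually_all.2 fun j =>
      ((hthB i j).tendsto.comp hB).eventually_ne (hreg i j)
  have e3 : ∀ᶠ t in 𝓝[≠] (0 : ℂ), ∀ i j, i ≠ j → th q (B t i / B t j) ≠ 0 := by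
    refine eventually_all.2 fun i => eventually_all.2 fun j => ?_
    by_cases hij : i = j
    · exact Eventually.of_forall fun t h => absurd hij h
    have hdiv : Tendsto (fun t => B t i / B t j) (𝓝[≠] 0) (𝓝[≠] (b i / b j)) := by
      refine tendsto_nhdsWithin_iff.2 ⟨?_, ?_⟩
      · exact (((continuous_apply i).tendsto b).comp hB).div
          (((continuous_apply j).tendsto b).comp hB) (hb j)
      · filter_upwards [e1, self_mem_nhdsWithin] with t ht ht0 h
        rw [Set.mem_singleton_iff, div_eq_div_iff (ht j) (hb j)] at h
        have h4 : b i * b j * t * ((i : ℕ) - (j : ℕ) : ℂ) = 0 := by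
          simp only [hBdef] at h
          linear_combination h
        have h5 : ((i : ℕ) - (j : ℕ) : ℂ) ≠ 0 := by
          rw [sub_ne_zero]
          exact fun h => hij (Fin.ext (Nat.cast_injective h))
        exact mul_ne_zero (mul_ne_zero (mul_ne_zero (hb i) (hb j)) ht0) h5 h4
    exact (hdiv.eventually (th_eventually_ne hq0 hq (div_ne_zero (hb i) (hb j)))).mono
      fun t h _ => h
  filter_upwards [e1, e2, e3] with t h1 h2 h3
  exact zero_eval_generic hq0 hq hx h1 h2 h3
end

/-! ### The multiple series as a determinant -/

/-- Fubini for a product of absolutely convergent series, indexed by `ℤⁿ`. -/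
lemma summable_prod_pi : ∀ (n : ℕ) (f : Fin n → ℤ → ℂ), (∀ i, Summable fun ν => ‖f i ν‖) →
    (Summable fun ν : Fin n → ℤ => ‖∏ i, f i (ν i)‖) ∧
      ∑' ν : Fin n → ℤ, ∏ i, f i (ν i) = ∏ i, ∑' ν, f i ν := by
  intro n
  induction n with
  | zero =>
    intro f _
    exact ⟨Summable.of_finite, by simp⟩
  | succ n ih =>
    intro f hf
    obtain ⟨h1, h2⟩ := ih (fun i => f i.succ) fun i => hf _
    have hf0 := hf 0
    have h3 : ∀ p : ℤ × (Fin n → ℤ), ∏ i, f i (Fin.consEquiv (fun _ => ℤ) p i) =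
        f 0 p.1 * ∏ i, f i.succ (p.2 i) := fun p => by
      rw [Fin.prod_univ_succ]; simp [Fin.consEquiv]
    rw [Fin.prod_univ_succ, ← h2]
    generalize hv : (fun ν : Fin n → ℤ => ∏ i, f i.succ (ν i)) = v at h1 h2
    replace h3 : ∀ p : ℤ × (Fin n → ℤ), ∏ i, f i (Fin.consEquiv (fun _ => ℤ) p i) =
        f 0 p.1 * v p.2 := fun p => by rw [h3, ← hv]
    replace h1 : Summable fun ν => ‖v ν‖ := by rw [← hv]; exact h1
    generalize f 0 = u at h3 hf0
    constructor
    · refine ((Fin.consEquiv fun _ => ℤ).summable_iff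
        (f := fun ν : Fin (n + 1) → ℤ => ‖∏ i, f i (ν i)‖)).1 ?_
      exact (hf0.mul_norm h1).congr fun p => by rw [Function.comp_apply, h3]
    · rw [← (Fin.consEquiv fun _ => ℤ).tsum_eq, tsum_mul_tsum_of_summable_norm hf0 h1]
      exact tsum_congr h3

section
variable {n : ℕ} {q : ℂ} {a b : Fin (n + 1) → ℂ} {x : Fin n → ℂ}

/-- The Vandermonde factor splits the summand into products of one-variable terms. -/
lemma daTerm_eq (ν : Fin n → ℤ) : daTerm q a b x ν =
    ∑ σ : Equiv.Perm (Fin n), ((Equiv.Perm.sign σ : ℤ) : ℂ) *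
      ∏ i, tm q (fun j => q * (a j)⁻¹) b ((σ i : ℕ) + 1) (x i * q ^ ν i) := by
  rw [daTerm, ← Matrix.det_vandermonde (fun i => x i * q ^ ν i), ← Matrix.det_transpose,
    Matrix.det_apply', Finset.mul_sum]
  refine Finset.sum_congr rfl fun σ _ => ?_
  rw [mul_left_comm, ← Finset.prod_mul_distrib]
  congr 1
  refine Finset.prod_congr rfl fun i _ => ?_
  rw [tm, Matrix.transpose_apply, Matrix.vandermonde_apply, pow_succ]
  ring

/-- The `n`-fold series converges absolutely, and its sum is a determinant of moments. -/
lemma daTerm_summable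
    (hs : ∀ i (k : Fin n), Summable fun ν : ℤ =>
      ‖tm q (fun j => q * (a j)⁻¹) b ((k : ℕ) + 1) (x i * q ^ ν)‖) :
    Summable (daTerm q a b x) ∧
      ∑' ν, daTerm q a b x ν = (Matrix.of fun k i : Fin n =>
        ph q (fun j => q * (a j)⁻¹) b ((k : ℕ) + 1) (x i)).det := by
  have h := fun σ : Equiv.Perm (Fin n) => summable_prod_pi n
    (fun i ν => tm q (fun j => q * (a j)⁻¹) b ((σ i : ℕ) + 1) (x i * q ^ ν)) fun i => hs i (σ i)
  have h1 : ∀ σ : Equiv.Perm (Fin n), Summable fun ν : Fin n → ℤ =>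
      ((Equiv.Perm.sign σ : ℤ) : ℂ) *
      ∏ i, tm q (fun j => q * (a j)⁻¹) b ((σ i : ℕ) + 1) (x i * q ^ ν i) := fun σ =>
    (h σ).1.of_norm.mul_left _
  have hf : daTerm q a b x = fun ν => ∑ σ : Equiv.Perm (Fin n), ((Equiv.Perm.sign σ : ℤ) : ℂ) *
      ∏ i, tm q (fun j => q * (a j)⁻¹) b ((σ i : ℕ) + 1) (x i * q ^ ν i) := funext daTerm_eq
  rw [hf]
  refine ⟨summable_sum fun σ _ => h1 σ, ?_⟩
  rw [Summable.tsum_finsetSum fun σ _ => h1 σ, Matrix.det_apply']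
  refine Finset.sum_congr rfl fun σ _ => ?_
  rw [tsum_mul_left, (h σ).2]
  rfl
end

/-- Bilateral extension of Evans's q-Dixon–Anderson integral. -/
theorem bilateral_dixon_anderson
    (q : ℝ) (hq0 : 0 < q) (hq1 : q < 1) (n : ℕ) (hn : 1 ≤ n)
    (a b : Fin (n + 1) → ℂ) (ha : ∀ i, a i ≠ 0) (hb : ∀ i, b i ≠ 0)
    (hbal : (q : ℝ) < ‖(∏ i, a i) * ∏ i, b i‖)
    (x : Fin (n + 1) → ℂ) (hx : ∀ i, x i ≠ 0)
    (hxb : ∀ i j, ∀ m : ℤ, x i * b j ≠ (q : ℂ) ^ m) :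
    (∀ i : Fin (n + 1), Summable (daTerm (q : ℂ) a b fun k => x (i.succAbove k))) ∧
      (∑ i : Fin (n + 1), (-1 : ℂ) ^ (i : ℕ) * daSum (q : ℂ) a b fun k => x (i.succAbove k)) =
        (1 - (q : ℂ)) ^ n * qp (q : ℂ) (q : ℂ) ^ n *
            (∏ i, ∏ j, qp (q : ℂ) ((q : ℂ) * (a i)⁻¹ * (b j)⁻¹)) /
            qp (q : ℂ) ((q : ℂ) * (∏ i, a i)⁻¹ * (∏ i, b i)⁻¹) *
          (th (q : ℂ) ((∏ i, x i) * ∏ i, b i) / ∏ i, ∏ j, th (q : ℂ) (x i * b j)) *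
          ∏ i, ∏ j ∈ Finset.Ioi i, x j * th (q : ℂ) (x i / x j) := by
  have hQ0 : (q : ℂ) ≠ 0 := by exact_mod_cast hq0.ne'
  have hnq : ‖(q : ℂ)‖ = q := by rw [Complex.norm_real, Real.norm_of_nonneg hq0.le]
  have hQ : ‖(q : ℂ)‖ < 1 := by rw [hnq]; exact hq1
  have hreg : ∀ i j, th (q : ℂ) (x i * b j) ≠ 0 := fun i j =>
    th_ne_zero hQ0 hQ (mul_ne_zero (hx i) (hb j)) (hxb i j)
  have hA : ∏ i, a i ≠ 0 := Finset.prod_ne_zero_iff.2 fun j _ => ha j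
  have hB : ∏ i, b i ≠ 0 := Finset.prod_ne_zero_iff.2 fun j _ => hb j
  have hα : ∏ j, (q : ℂ) * (a j)⁻¹ = (q : ℂ) ^ (n + 1) * (∏ i, a i)⁻¹ := by
    rw [Finset.prod_mul_distrib, Finset.prod_inv_distrib, Finset.prod_const, Finset.card_univ,
      Fintype.card_fin]
  have hdom : ‖∏ j, (q : ℂ) * (a j)⁻¹‖ < ‖(q : ℂ)‖ ^ n * ‖∏ j, b j‖ := by
    rw [hα, norm_mul, norm_pow, norm_inv, hnq, pow_succ, mul_assoc]
    refine mul_lt_mul_of_pos_left ?_ (pow_pos hq0 n)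
    rw [norm_mul] at hbal
    rwa [← div_eq_mul_inv, div_lt_iff₀ (norm_pos_iff.2 hA), mul_comm]
  have hdom' : ∀ k : Fin n,
      ‖∏ j, (q : ℂ) * (a j)⁻¹‖ < ‖(q : ℂ)‖ ^ ((k : ℕ) + 1) * ‖∏ j, b j‖ := fun k =>
    hdom.trans_le (mul_le_mul_of_nonneg_right
      (pow_le_pow_of_le_one (norm_nonneg _) hQ.le k.2) (norm_nonneg _))
  have hJ := fun i : Fin (n + 1) => daTerm_summable (q := q) (a := a) (b := b)
    (x := fun k => x (i.succAbove k)) fun l k =>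
      tm_summable hQ0 hQ (hx _) hb (hreg _) (Nat.succ_ne_zero _) (hdom' k)
  refine ⟨fun i => (hJ i).1, ?_⟩
  -- Cofactor expansion along the row of ones.
  have hdet : ∑ i : Fin (n + 1), (-1 : ℂ) ^ (i : ℕ) *
      daSum (q : ℂ) a b (fun k => x (i.succAbove k)) =
      (1 - (q : ℂ)) ^ n * (Mx (q : ℂ) (fun j => (q : ℂ) * (a j)⁻¹) b x).det := by
    rw [Matrix.det_succ_row_zero, Finset.mul_sum]
    refine Finset.sum_congr rfl fun i _ => ?_
    have h1 : (Mx (q : ℂ) (fun j => (q : ℂ) * (a j)⁻¹) b x).submatrix Fin.succ i.succAbove =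
        Matrix.of fun k l : Fin n =>
          ph (q : ℂ) (fun j => (q : ℂ) * (a j)⁻¹) b ((k : ℕ) + 1) (x (i.succAbove l)) := by
      ext k l
      simp [Mx]
    have h2 : Mx (q : ℂ) (fun j => (q : ℂ) * (a j)⁻¹) b x 0 i = 1 := by simp [Mx]
    rw [daSum, (hJ i).2, h1, h2]
    ring
  have harg : ((q : ℂ) ^ n)⁻¹ * (∏ j, (q : ℂ) * (a j)⁻¹) / ∏ j, b j =
      (q : ℂ) * (∏ i, a i)⁻¹ * (∏ i, b i)⁻¹ := by
    rw [hα, pow_succ]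
    field_simp
  have hne : qp (q : ℂ) ((q : ℂ) * (∏ i, a i)⁻¹ * (∏ i, b i)⁻¹) ≠ 0 := by
    refine qp_ne_zero hQ fun k h => ?_
    have h1 := congrArg norm h
    rw [mul_assoc (q : ℂ), ← mul_inv, norm_mul, norm_pow, norm_mul, norm_inv, hnq, norm_one] at h1
    have h2 : q * ‖(∏ i, a i) * ∏ i, b i‖⁻¹ < 1 := by
      rwa [← div_eq_mul_inv, div_lt_one (hq0.trans hbal)]
    have h3 : q ^ k * (q * ‖(∏ i, a i) * ∏ i, b i‖⁻¹) < 1 :=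
      mul_lt_one_of_nonneg_of_lt_one_right (pow_le_one₀ hq0.le hq1.le) (by positivity) h2
    exact h3.ne h1
  have hM := Mx_eq hQ0 hQ hx hb hreg hdom
  rw [harg, zero_eval hQ0 hQ hx hb hreg, ← eq_div_iff hne] at hM
  rw [hdet, hM, zeroRhs]
  simp only [div_eq_mul_inv]
  ring
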